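/- arXiv:1811.07735 — 4 statements merged into one kernel-verified Lean document; each statement's English description precedes it below -/
import Mathlib

section
/- Let F be a foliation of degree 4 on ℙ²(ℂ) defined by ω = a dx + b dy + c dz (a, b, c ∈ ℂ[x,y,z] homogeneous of degree 5 without common factor, xa + yb + zc = 0), and assume F admits 12 pairwise non-proportional invariant lines (i.e. F is reduced convex). Then ω is linearly conjugate either to the Fermat foliation ω_F = z(yz³ − y⁴)dx + z(x⁴ − xz³)dy + (xy⁴ − x⁴y)dz, or to the Hesse pencil ω_H = yz(2x³ − y³ − z³)dx + xz(2y³ − x³ − z³)dy − xy(x³ + y³ − 2z³)dz. -/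
open MvPolynomial

noncomputable section

/-- Polynomials in three variables `x = X 0`, `y = X 1`, `z = X 2` over `ℂ`. -/
abbrev P3 : Type := MvPolynomial (Fin 3) ℂ

/-- The linear form `αx + βy + γz` with coefficient vector `l = (α, β, γ)`. -/
def lin (l : Fin 3 → ℂ) : P3 := C (l 0) * X 0 + C (l 1) * X 1 + C (l 2) * X 2

/-- The line `{αx + βy + γz = 0}` is invariant by the foliation defined by
`ω = a dx + b dy + c dz`: the linear form divides the coefficients of `ω ∧ dℓ`. -/
def InvLine (a b c : P3) (l : Fin 3 → ℂ) : Prop :=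
  l ≠ 0 ∧
  lin l ∣ (C (l 1) * a - C (l 0) * b) ∧
  lin l ∣ (C (l 2) * a - C (l 0) * c) ∧
  lin l ∣ (C (l 2) * b - C (l 1) * c)

/-- `(a, b, c)` defines a foliation of degree `d` on `ℙ²(ℂ)`: homogeneous of degree
`d+1`, without common factor, satisfying the Euler condition. -/
def IsFoliation (d : ℕ) (a b c : P3) : Prop :=
  a.IsHomogeneous (d + 1) ∧ b.IsHomogeneous (d + 1) ∧ c.IsHomogeneous (d + 1) ∧
  (∀ p : P3, p ∣ a → p ∣ b → p ∣ c → IsUnit p) ∧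
  X 0 * a + X 1 * b + X 2 * c = 0

/-- Composition of a polynomial with the linear map of `ℂ³` given by the matrix `M`. -/
def compM (M : Matrix (Fin 3) (Fin 3) ℂ) (p : P3) : P3 :=
  aeval (fun i => ∑ j, C (M i j) * X j) p

/-- The coefficients of the pullback `M*ω`, i.e. `Mᵀ·(a∘M, b∘M, c∘M)`. -/
def pullbackM (M : Matrix (Fin 3) (Fin 3) ℂ) (a b c : P3) : Fin 3 → P3 :=
  fun i => C (M 0 i) * compM M a + C (M 1 i) * compM M b + C (M 2 i) * compM M c

/-- The foliations defined by `ω = a dx + b dy + c dz` and `ω' = a' dx + b' dy + c' dz`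
are linearly conjugate: `M*ω = λω'` for some `M ∈ GL₃(ℂ)` and `λ ∈ ℂ \ {0}`. -/
def LinConj3 (a b c a' b' c' : P3) : Prop :=
  ∃ M : Matrix (Fin 3) (Fin 3) ℂ, M.det ≠ 0 ∧ ∃ lam : ℂ, lam ≠ 0 ∧
    pullbackM M a b c 0 = C lam * a' ∧
    pullbackM M a b c 1 = C lam * b' ∧
    pullbackM M a b c 2 = C lam * c'

/-- The Fermat foliation of degree 4, `ω_F = z(yz³ − y⁴)dx + z(x⁴ − xz³)dy + (xy⁴ − x⁴y)dz`. -/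
def aF : P3 := X 2 * (X 1 * X 2 ^ 3 - X 1 ^ 4)
def bF : P3 := X 2 * (X 0 ^ 4 - X 0 * X 2 ^ 3)
def cF : P3 := X 0 * X 1 ^ 4 - X 0 ^ 4 * X 1

/-- The Hesse pencil of degree 4,
`ω_H = yz(2x³ − y³ − z³)dx + xz(2y³ − x³ − z³)dy − xy(x³ + y³ − 2z³)dz`. -/
def aH : P3 := X 1 * X 2 * (2 * X 0 ^ 3 - X 1 ^ 3 - X 2 ^ 3)
def bH : P3 := X 0 * X 2 * (2 * X 1 ^ 3 - X 0 ^ 3 - X 2 ^ 3)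
def cH : P3 := -(X 0 * X 1 * (X 0 ^ 3 + X 1 ^ 3 - 2 * X 2 ^ 3))

lemma compM_compM (M N : Matrix (Fin 3) (Fin 3) ℂ) (p : P3) :
    compM N (compM M p) = compM (M * N) p := by
  have : ((aeval (fun i => ∑ j, C (N i j) * X j) : P3 →ₐ[ℂ] P3).comp
      (aeval (fun i => ∑ j, C (M i j) * X j) : P3 →ₐ[ℂ] P3))
      = aeval (fun i => ∑ j, C ((M * N) i j) * X j) := by
    apply MvPolynomial.algHom_ext
    intro i
    simp only [AlgHom.comp_apply, aeval_X, map_sum, map_mul, MvPolynomial.algHom_C,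
      Matrix.mul_apply, Fin.sum_univ_three, map_add, algebraMap_eq]
    ring
  exact DFunLike.congr_fun this p

lemma compM_one (p : P3) : compM 1 p = p := by
  have : (aeval (fun i => ∑ j, C ((1 : Matrix (Fin 3) (Fin 3) ℂ) i j) * X j) : P3 →ₐ[ℂ] P3)
      = AlgHom.id ℂ P3 := by
    apply MvPolynomial.algHom_ext
    intro i
    fin_cases i <;> simp [Fin.sum_univ_three, Matrix.one_apply]
  unfold compM
  rw [this]; rfl

lemma compM_add (M : Matrix (Fin 3) (Fin 3) ℂ) (p q : P3) :
    compM M (p + q) = compM M p + compM M q := by simp [compM]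
lemma compM_sub (M : Matrix (Fin 3) (Fin 3) ℂ) (p q : P3) :
    compM M (p - q) = compM M p - compM M q := by simp [compM]
lemma compM_mul (M : Matrix (Fin 3) (Fin 3) ℂ) (p q : P3) :
    compM M (p * q) = compM M p * compM M q := by simp [compM]
lemma compM_C (M : Matrix (Fin 3) (Fin 3) ℂ) (r : ℂ) : compM M (C r) = C r := by
  simp [compM]
lemma compM_X (M : Matrix (Fin 3) (Fin 3) ℂ) (i : Fin 3) :
    compM M (X i) = C (M i 0) * X 0 + C (M i 1) * X 1 + C (M i 2) * X 2 := by
  simp [compM, Fin.sum_univ_three]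
lemma compM_dvd (M : Matrix (Fin 3) (Fin 3) ℂ) {p q : P3} (h : p ∣ q) :
    compM M p ∣ compM M q := by
  obtain ⟨s, rfl⟩ := h
  exact ⟨compM M s, compM_mul _ _ _⟩

lemma compM_lin (M : Matrix (Fin 3) (Fin 3) ℂ) (l : Fin 3 → ℂ) :
    compM M (lin l) = lin (Matrix.vecMul l M) := by
  simp only [lin, compM_add, compM_mul, compM_C, compM_X, Matrix.vecMul, dotProduct,
    Fin.sum_univ_three, C_add, C_mul]
  ring

lemma compM_hom (M : Matrix (Fin 3) (Fin 3) ℂ) {p : P3} {n : ℕ} (h : p.IsHomogeneous n) :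
    (compM M p).IsHomogeneous n := by
  have := h.aeval (fun i => ∑ j, C (M i j) * X j : Fin 3 → P3) (n := 1) (by
    intro i
    apply IsHomogeneous.sum
    intro j _
    exact isHomogeneous_C_mul_X _ _)
  simpa [compM] using this

/-- Change of coordinates. -/
lemma pull (N : Matrix (Fin 3) (Fin 3) ℂ) (hN : N.det ≠ 0) (a b c : P3)
    (h : IsFoliation 4 a b c) :
    ∃ a2 b2 c2 : P3, IsFoliation 4 a2 b2 c2 ∧
      (∀ v, InvLine a b c (Matrix.vecMul v N) → InvLine a2 b2 c2 v) ∧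
      ∀ a' b' c', LinConj3 a2 b2 c2 a' b' c' → LinConj3 a b c a' b' c' := by
  obtain ⟨M, hMN, hNM⟩ : ∃ M : Matrix (Fin 3) (Fin 3) ℂ, M * N = 1 ∧ N * M = 1 :=
    ⟨N⁻¹, Matrix.nonsing_inv_mul _ (isUnit_iff_ne_zero.2 hN),
      Matrix.mul_nonsing_inv _ (isUnit_iff_ne_zero.2 hN)⟩
  have hMdet : M.det ≠ 0 := by
    intro h0
    have := congrArg Matrix.det hMN
    simp [h0] at this
  obtain ⟨ha, hb, hc, hcop, heul⟩ := h
  have hcoef : ∀ i k, (∑ j, N j i * M k j) = if k = i then 1 else 0 := by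
    intro i k
    have := congrFun (congrFun hMN k) i
    rw [Matrix.mul_apply, Matrix.one_apply] at this
    rw [← this]
    exact Finset.sum_congr rfl fun _ _ => mul_comm _ _
  refine ⟨pullbackM M a b c 0, pullbackM M a b c 1, pullbackM M a b c 2, ⟨?_, ?_, ?_, ?_, ?_⟩, ?_, ?_⟩
  iterate 3
    · exact (((compM_hom M ha).C_mul _).add ((compM_hom M hb).C_mul _)).add
        ((compM_hom M hc).C_mul _)
  · intro p h0 h1 h2
    have key : ∀ i, C (N 0 i) * pullbackM M a b c 0 + C (N 1 i) * pullbackM M a b c 1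
        + C (N 2 i) * pullbackM M a b c 2 =
        C (∑ j, N j i * M 0 j) * compM M a + C (∑ j, N j i * M 1 j) * compM M b
        + C (∑ j, N j i * M 2 j) * compM M c := by
      intro i
      simp only [pullbackM, Fin.sum_univ_three, C_add, C_mul]
      ring
    have kd : ∀ i, p ∣ C (N 0 i) * pullbackM M a b c 0 + C (N 1 i) * pullbackM M a b c 1
        + C (N 2 i) * pullbackM M a b c 2 := fun i =>
      dvd_add (dvd_add (h0.mul_left _) (h1.mul_left _)) (h2.mul_left _)
    have back : ∀ q, compM N (compM M q) = q := by
      intro q; rw [compM_compM, hMN, compM_one]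
    have back' : ∀ q, compM M (compM N q) = q := by
      intro q; rw [compM_compM, hNM, compM_one]
    have d0 := kd 0
    have d1 := kd 1
    have d2 := kd 2
    rw [key] at d0 d1 d2
    simp only [hcoef] at d0 d1 d2
    simp at d0 d1 d2
    have u := hcop (compM N p) (by simpa [back] using compM_dvd N d0)
      (by simpa [back] using compM_dvd N d1) (by simpa [back] using compM_dvd N d2)
    rw [← back' p]
    exact u.map (aeval (fun i => ∑ j, C (M i j) * X j) : P3 →ₐ[ℂ] P3)
  · have := congrArg (compM M) heul
    simp only [compM_add, compM_mul, compM_X] at this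
    have h0 : compM M 0 = 0 := by simp [compM]
    rw [h0] at this
    simp only [pullbackM]
    linear_combination this
  · intro v hv
    obtain ⟨hv0, h1, h2, h3⟩ := hv
    set l := Matrix.vecMul v N with hl
    have hvl : Matrix.vecMul l M = v := by
      rw [hl, Matrix.vecMul_vecMul, hNM, Matrix.vecMul_one]
    have e : ∀ j, v j = l 0 * M 0 j + l 1 * M 1 j + l 2 * M 2 j := by
      intro j
      conv_lhs => rw [← hvl]
      simp [Matrix.vecMul, dotProduct, Fin.sum_univ_three]
    refine ⟨?_, ?_⟩
    · rintro rfl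
      simp [hl] at hv0
    have g1 := compM_dvd M h1
    have g2 := compM_dvd M h2
    have g3 := compM_dvd M h3
    rw [compM_lin, hvl] at g1 g2 g3
    simp only [compM_sub, compM_mul, compM_C] at g1 g2 g3
    obtain ⟨q1, g1⟩ := g1
    obtain ⟨q2, g2⟩ := g2
    obtain ⟨q3, g3⟩ := g3
    have main : ∀ i j, lin v ∣ C (v j) * pullbackM M a b c i - C (v i) * pullbackM M a b c j := by
      intro i j
      refine ⟨q1 * C (M 0 i * M 1 j - M 1 i * M 0 j) + q2 * C (M 0 i * M 2 j - M 2 i * M 0 j)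
        + q3 * C (M 1 i * M 2 j - M 2 i * M 1 j), ?_⟩
      simp only [pullbackM, e, C_add, C_mul, C_sub]
      linear_combination (C (M 0 i) * C (M 1 j) - C (M 1 i) * C (M 0 j)) * g1
        + (C (M 0 i) * C (M 2 j) - C (M 2 i) * C (M 0 j)) * g2
        + (C (M 1 i) * C (M 2 j) - C (M 2 i) * C (M 1 j)) * g3
    exact ⟨main 0 1, main 0 2, main 1 2⟩
  · rintro a' b' c' ⟨M', hM', lam, hlam, e0, e1, e2⟩
    have comp : ∀ i, pullbackM (M * M') a b c i = pullbackM M' (pullbackM M a b c 0)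
        (pullbackM M a b c 1) (pullbackM M a b c 2) i := by
      intro i
      simp only [pullbackM, compM_add, compM_mul, compM_C, compM_compM, Matrix.mul_apply,
        Fin.sum_univ_three, C_add, C_mul]
      ring
    refine ⟨M * M', by simp [hMdet, hM'], lam, hlam, ?_, ?_, ?_⟩
    · rw [comp, e0]
    · rw [comp, e1]
    · rw [comp, e2]

lemma InvLine.smul {a b c : P3} {l : Fin 3 → ℂ} (h : InvLine a b c l) {t : ℂ} (ht : t ≠ 0) :
    InvLine a b c (t • l) := by
  obtain ⟨h0, h1, h2, h3⟩ := h
  have hu : lin (t • l) = C t * lin l := by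
    simp only [lin, Pi.smul_apply, smul_eq_mul, C_mul]; ring
  have hCt : IsUnit (C t : P3) := (isUnit_iff_ne_zero.2 ht).map C
  have hd : ∀ {p}, lin l ∣ p → lin (t • l) ∣ C t * p := by
    intro p hp
    rw [hu]; exact mul_dvd_mul_left _ hp
  refine ⟨smul_ne_zero ht h0, ?_, ?_, ?_⟩
  · convert hd h1 using 1
    simp only [Pi.smul_apply, smul_eq_mul, C_mul]; ring
  · convert hd h2 using 1
    simp only [Pi.smul_apply, smul_eq_mul, C_mul]; ring
  · convert hd h3 using 1
    simp only [Pi.smul_apply, smul_eq_mul, C_mul]; ring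

lemma prod_pow_dvd (s : Finset ℂ) (m : ℂ → ℕ) (P : Polynomial ℂ)
    (h : ∀ r ∈ s, (Polynomial.X - Polynomial.C r) ^ m r ∣ P) (hP : P ≠ 0) :
    ∑ r ∈ s, m r ≤ P.natDegree := by
  have hd : (∏ r ∈ s, (Polynomial.X - Polynomial.C r) ^ m r) ∣ P := by
    apply Finset.prod_dvd_of_coprime
    · intro r _ r' _ hrr
      exact (Polynomial.pairwise_coprime_X_sub_C Function.injective_id hrr).pow
    · exact h
  have := Polynomial.natDegree_le_of_dvd hd hP
  rw [Polynomial.natDegree_prod_of_monic _ _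
    (fun r _ => (Polynomial.monic_X_sub_C r).pow _)] at this
  simpa using this

lemma wronskian_deg (A B : Polynomial ℂ) (hA : A.natDegree ≤ 4) (hB : B.natDegree ≤ 4)
    (hw : Polynomial.wronskian A B ≠ 0) : (Polynomial.wronskian A B).natDegree ≤ 6 := by
  have aux : ∀ P : Polynomial ℂ, P.natDegree ≤ 4 → P.coeff 4 = 0 → P.natDegree ≤ 3 := by
    intro P h1 h2
    rw [Polynomial.natDegree_le_iff_coeff_eq_zero]
    intro n hn
    rcases Nat.lt_or_ge 4 n with h | h
    · exact Polynomial.coeff_eq_zero_of_natDegree_lt (by omega)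
    · obtain rfl : n = 4 := by omega
      exact h2
  by_cases h4 : A.coeff 4 = 0
  · have := Polynomial.natDegree_wronskian_lt_add hw
    have := aux A hA h4
    omega
  · set B' := B - Polynomial.C (B.coeff 4 / A.coeff 4) * A with hB'
    have e : Polynomial.wronskian A B = Polynomial.wronskian A B' := by
      simp only [hB', Polynomial.wronskian, Polynomial.derivative_sub, Polynomial.derivative_C_mul]
      ring
    rw [e] at hw ⊢
    have h1 := Polynomial.natDegree_wronskian_lt_add hw
    have h2 : B'.natDegree ≤ 3 := by
      apply aux
      · apply (Polynomial.natDegree_sub_le _ _).trans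
        apply max_le hB
        exact (Polynomial.natDegree_C_mul_le _ _).trans hA
      · simp [hB', h4]
    omega

lemma type_card (A B : Polynomial ℂ) (hA : A.natDegree ≤ 4) (hB : B.natDegree ≤ 4)
    (hT : Polynomial.X * A + B ≠ 0) (R : Finset ℂ) (k : ℂ → ℕ)
    (hk1 : ∀ r ∈ R, 1 ≤ k r) (hk4 : ∀ r ∈ R, k r ≤ 4) (hsum : ∑ r ∈ R, k r = 11)
    (hd : ∀ r ∈ R, (Polynomial.X - Polynomial.C r) ^ k r ∣ Polynomial.C r * A + B) :
    R.card = 5 ∧ ¬ (∀ r ∈ R, 2 ≤ k r) := by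
  have hTdeg : (Polynomial.X * A + B).natDegree ≤ 5 := by
    apply (Polynomial.natDegree_add_le _ _).trans
    apply max_le _ (by omega)
    apply Polynomial.natDegree_mul_le.trans
    have := Polynomial.natDegree_X_le (R := ℂ)
    omega
  have hroot : ∀ r ∈ R, r * A.eval r + B.eval r = 0 := by
    intro r hr
    obtain ⟨q, hq⟩ := (dvd_pow_self (Polynomial.X - Polynomial.C r)
      (by have := hk1 r hr; omega)).trans (hd r hr)
    have := congrArg (Polynomial.eval r) hq
    simpa using this
  have hle : R.card ≤ 5 := by
    refine (Polynomial.card_le_degree_of_subset_roots (p := Polynomial.X * A + B) ?_).trans hTdeg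
    intro r hr
    rw [Polynomial.mem_roots hT]
    simpa using hroot r hr
  have hge : 5 ≤ R.card := by
    by_cases hw : Polynomial.wronskian A B = 0
    · exfalso
      have hg : ∃ g a b : Polynomial ℂ, IsCoprime a b ∧ A = g * a ∧ B = g * b := by
        by_cases hA0 : A = 0
        · exact ⟨B, 0, 1, isCoprime_zero_left.2 isUnit_one, by simp [hA0], by simp⟩
        · obtain ⟨a, b, g, hab, h1, h2⟩ :=
            UniqueFactorizationMonoid.exists_reduced_factors A hA0 B
          exact ⟨g, a, b, hab.isCoprime, h1.symm, h2.symm⟩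
      obtain ⟨g, a, b, hab, rfl, rfl⟩ := hg
      have hg0 : g ≠ 0 := by rintro rfl; simp at hT
      have hw' : Polynomial.wronskian a b = 0 := by
        have : Polynomial.wronskian (g * a) (g * b) = g ^ 2 * Polynomial.wronskian a b := by
          simp only [Polynomial.wronskian, Polynomial.derivative_mul]; ring
        rw [this] at hw
        simpa [hg0] using hw
      obtain ⟨ha, hb⟩ := hab.wronskian_eq_zero_iff.1 hw'
      obtain ⟨u, rfl⟩ : ∃ u, a = Polynomial.C u :=
        ⟨_, Polynomial.eq_C_of_derivative_eq_zero ha⟩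
      obtain ⟨v, rfl⟩ : ∃ v, b = Polynomial.C v :=
        ⟨_, Polynomial.eq_C_of_derivative_eq_zero hb⟩
      have huv : ¬ (u = 0 ∧ v = 0) := by
        rintro ⟨rfl, rfl⟩; simp at hT
      have hgdeg : g.natDegree ≤ 4 := by
        by_cases hu : u = 0
        · have hv : v ≠ 0 := fun h => huv ⟨hu, h⟩
          rwa [Polynomial.natDegree_mul_C hv] at hB
        · rwa [Polynomial.natDegree_mul_C hu] at hA
      classical
      have hsplit := Finset.sum_filter_add_sum_filter_not R (fun r => r * u + v = 0) k
      have hs1 : ∑ r ∈ R.filter (fun r => ¬ (r * u + v = 0)), k r ≤ 4 := by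
        refine (prod_pow_dvd _ k g ?_ hg0).trans hgdeg
        intro r hr
        rw [Finset.mem_filter] at hr
        have := hd r hr.1
        have e : Polynomial.C r * (g * Polynomial.C u) + g * Polynomial.C v
            = Polynomial.C (r * u + v) * g := by
          simp only [Polynomial.C_add, Polynomial.C_mul]; ring
        rw [e] at this
        exact (Polynomial.dvd_C_mul hr.2).1 this
      have hs2 : ∑ r ∈ R.filter (fun r => r * u + v = 0), k r ≤ 4 := by
        have hc : (R.filter (fun r => r * u + v = 0)).card ≤ 1 := by
          rw [Finset.card_le_one]
          intro r hr r' hr'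
          rw [Finset.mem_filter] at hr hr'
          have hu : u ≠ 0 := by
            rintro rfl
            exact huv ⟨rfl, by simpa using hr.2⟩
          apply mul_right_cancel₀ hu
          linear_combination hr.2 - hr'.2
        calc _ ≤ (R.filter (fun r => r * u + v = 0)).card • 4 :=
              Finset.sum_le_card_nsmul _ _ _ (fun r hr => hk4 r (Finset.mem_filter.1 hr).1)
          _ ≤ 4 := by simp; omega
      omega
    · have h1 := (prod_pow_dvd R (fun r => k r - 1) _ ?_ hw).trans (wronskian_deg A B hA hB hw)
      · have h2 : ∑ r ∈ R, (k r - 1) + R.card = 11 := by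
          rw [← hsum, Finset.card_eq_sum_ones, ← Finset.sum_add_distrib]
          apply Finset.sum_congr rfl
          intro r hr
          have := hk1 r hr
          omega
        omega
      · intro r hr
        have h3 := hd r hr
        have e : Polynomial.wronskian A B =
            A * Polynomial.derivative (Polynomial.C r * A + B)
              - Polynomial.derivative A * (Polynomial.C r * A + B) := by
          simp only [Polynomial.wronskian, Polynomial.derivative_add, Polynomial.derivative_C_mul]
          ring
        rw [e]
        obtain ⟨q, hq⟩ := h3
        have hk := hk1 r hr
        obtain ⟨n, hn⟩ : ∃ n, k r = n + 1 := ⟨k r - 1, by omega⟩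
        rw [hn] at hq
        simp only [hn, Nat.add_sub_cancel]
        rw [hq]
        apply dvd_sub
        · apply Dvd.dvd.mul_left
          rw [Polynomial.derivative_mul, Polynomial.derivative_X_sub_C_pow]
          apply dvd_add
          · simp only [Nat.add_sub_cancel]
            exact ((dvd_refl _).mul_left _).mul_right _
          · exact (pow_dvd_pow _ (Nat.le_succ n)).mul_right _
        · exact ((pow_dvd_pow _ (Nat.le_succ n)).mul_right _).mul_left _
  have h5 : R.card = 5 := le_antisymm hle hge
  refine ⟨h5, fun h2 => ?_⟩
  have hder : ∀ r ∈ R, r * (Polynomial.derivative A).eval r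
      + (Polynomial.derivative B).eval r = 0 := by
    intro r hr
    obtain ⟨q, hq⟩ := (pow_dvd_pow (Polynomial.X - Polynomial.C r) (h2 r hr)).trans (hd r hr)
    have := congrArg (fun p => Polynomial.eval r (Polynomial.derivative p)) hq
    simpa [Polynomial.derivative_pow] using this
  -- `X A' + B'` has degree at most four and five roots
  have hz : Polynomial.X * Polynomial.derivative A + Polynomial.derivative B = 0 := by
    by_contra hne
    have := Polynomial.card_le_degree_of_subset_roots
      (p := Polynomial.X * Polynomial.derivative A + Polynomial.derivative B) (Z := R) (by
        intro r hr
        rw [Polynomial.mem_roots hne]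
        simpa using hder r hr)
    have hA' := Polynomial.natDegree_derivative_le A
    have hB' := Polynomial.natDegree_derivative_le B
    have : (Polynomial.X * Polynomial.derivative A + Polynomial.derivative B).natDegree ≤ 4 := by
      apply (Polynomial.natDegree_add_le _ _).trans
      apply max_le _ (by omega)
      apply Polynomial.natDegree_mul_le.trans
      have := Polynomial.natDegree_X_le (R := ℂ)
      omega
    omega
  have hA4 : A.coeff 4 = 0 := by
    have := congrArg (fun p => Polynomial.coeff p 4) hz
    simp only [Polynomial.coeff_add, Polynomial.coeff_X_mul, Polynomial.coeff_derivative,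
      Polynomial.coeff_zero] at this
    rw [Polynomial.coeff_eq_zero_of_natDegree_lt (p := B) (by omega)] at this
    norm_num at this
    exact this
  have hT4 : (Polynomial.X * A + B).natDegree ≤ 4 := by
    rw [Polynomial.natDegree_le_iff_coeff_eq_zero]
    intro n hn
    rcases Nat.lt_or_ge 5 n with h | h
    · exact Polynomial.coeff_eq_zero_of_natDegree_lt (by omega)
    · obtain rfl : n = 5 := by omega
      rw [Polynomial.coeff_add, Polynomial.coeff_X_mul, hA4,
        Polynomial.coeff_eq_zero_of_natDegree_lt (p := B) (by omega)]
      simp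
  have := Polynomial.card_le_degree_of_subset_roots (p := Polynomial.X * A + B) (Z := R) (by
    intro r hr
    rw [Polynomial.mem_roots hT]
    simpa using hroot r hr)
  omega

lemma type_list (R : Finset ℂ) (k : ℂ → ℕ) (h5 : R.card = 5)
    (hk1 : ∀ r ∈ R, 1 ≤ k r) (hk4 : ∀ r ∈ R, k r ≤ 4) (hsum : ∑ r ∈ R, k r = 11)
    (h2 : ¬ (∀ r ∈ R, 2 ≤ k r)) :
    ∃ ρ : Fin 5 → ℂ, Function.Injective ρ ∧
      ((k (ρ 0) = 1 ∧ k (ρ 1) = 1 ∧ k (ρ 2) = 1 ∧ k (ρ 3) = 4 ∧ k (ρ 4) = 4) ∨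
       (k (ρ 0) = 1 ∧ k (ρ 1) = 1 ∧ k (ρ 2) = 2 ∧ k (ρ 3) = 3 ∧ k (ρ 4) = 4) ∨
       (k (ρ 0) = 1 ∧ k (ρ 1) = 2 ∧ k (ρ 2) = 2 ∧ k (ρ 3) = 2 ∧ k (ρ 4) = 4) ∨
       (k (ρ 0) = 1 ∧ k (ρ 1) = 1 ∧ k (ρ 2) = 3 ∧ k (ρ 3) = 3 ∧ k (ρ 4) = 3) ∨
       (k (ρ 0) = 1 ∧ k (ρ 1) = 2 ∧ k (ρ 2) = 2 ∧ k (ρ 3) = 3 ∧ k (ρ 4) = 3)) := by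
  let e := (R.equivFinOfCardEq h5).symm
  let f : Fin 5 → ℕ := fun i => k (e i)
  let σ := Tuple.sort f
  have hm : Monotone (f ∘ σ) := Tuple.monotone_sort f
  have hinj : Function.Injective (fun i => ((e (σ i) : R) : ℂ)) :=
    Subtype.val_injective.comp (e.injective.comp σ.injective)
  refine ⟨fun i => e (σ i), hinj, ?_⟩
  have hs : ∑ i, f (σ i) = 11 := by
    rw [Equiv.sum_comp σ f, ← hsum, ← Finset.sum_coe_sort R k]
    exact Equiv.sum_comp e (fun r : R => k r)
  rw [Fin.sum_univ_five] at hs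
  have m01 : f (σ 0) ≤ f (σ 1) := hm (by decide)
  have m12 : f (σ 1) ≤ f (σ 2) := hm (by decide)
  have m23 : f (σ 2) ≤ f (σ 3) := hm (by decide)
  have m34 : f (σ 3) ≤ f (σ 4) := hm (by decide)
  have b0 : 1 ≤ f (σ 0) := hk1 _ (e (σ 0)).2
  have b4 : f (σ 4) ≤ 4 := hk4 _ (e (σ 4)).2
  have hone : f (σ 0) = 1 := by
    by_contra hne
    apply h2
    intro r hr
    have : ∃ i, e (σ i) = ⟨r, hr⟩ := ⟨σ.symm (e.symm ⟨r, hr⟩), by simp⟩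
    obtain ⟨i, hi⟩ := this
    have h0 : f (σ 0) ≤ f (σ i) := hm (Fin.zero_le i)
    have : f (σ i) = k r := by simp only [f, hi]
    omega
  change (f (σ 0) = 1 ∧ f (σ 1) = 1 ∧ f (σ 2) = 1 ∧ f (σ 3) = 4 ∧ f (σ 4) = 4) ∨
       (f (σ 0) = 1 ∧ f (σ 1) = 1 ∧ f (σ 2) = 2 ∧ f (σ 3) = 3 ∧ f (σ 4) = 4) ∨
       (f (σ 0) = 1 ∧ f (σ 1) = 2 ∧ f (σ 2) = 2 ∧ f (σ 3) = 2 ∧ f (σ 4) = 4) ∨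
       (f (σ 0) = 1 ∧ f (σ 1) = 1 ∧ f (σ 2) = 3 ∧ f (σ 3) = 3 ∧ f (σ 4) = 3) ∨
       (f (σ 0) = 1 ∧ f (σ 1) = 2 ∧ f (σ 2) = 2 ∧ f (σ 3) = 3 ∧ f (σ 4) = 3)
  omega

/-- The general ternary quartic with given coefficients. -/
def H4 (f : ℕ → ℕ → ℂ) : P3 :=
  C (f 4 0) * X 0 ^ 4 + C (f 3 1) * X 0 ^ 3 * X 1 + C (f 2 2) * X 0 ^ 2 * X 1 ^ 2
  + C (f 1 3) * X 0 * X 1 ^ 3 + C (f 0 4) * X 1 ^ 4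
  + X 2 * (C (f 3 0) * X 0 ^ 3 + C (f 2 1) * X 0 ^ 2 * X 1 + C (f 1 2) * X 0 * X 1 ^ 2
    + C (f 0 3) * X 1 ^ 3)
  + X 2 ^ 2 * (C (f 2 0) * X 0 ^ 2 + C (f 1 1) * X 0 * X 1 + C (f 0 2) * X 1 ^ 2)
  + X 2 ^ 3 * (C (f 1 0) * X 0 + C (f 0 1) * X 1)
  + C (f 0 0) * X 2 ^ 4

/-- Its dehomogenization. -/
def h4 (f : ℕ → ℕ → ℂ) (x y : ℂ) : ℂ :=
  f 4 0 * x ^ 4 + f 3 1 * x ^ 3 * y + f 2 2 * x ^ 2 * y ^ 2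
  + f 1 3 * x * y ^ 3 + f 0 4 * y ^ 4
  + (f 3 0 * x ^ 3 + f 2 1 * x ^ 2 * y + f 1 2 * x * y ^ 2 + f 0 3 * y ^ 3)
  + (f 2 0 * x ^ 2 + f 1 1 * x * y + f 0 2 * y ^ 2)
  + (f 1 0 * x + f 0 1 * y) + f 0 0

lemma eval_H4 (f : ℕ → ℕ → ℂ) (x y : ℂ) : eval ![x, y, 1] (H4 f) = h4 f x y := by
  simp [H4, h4]

lemma hom4_expand (p : P3) (hp : p.IsHomogeneous 4) : ∃ f, p = H4 f := by
  let D : ℕ × ℕ → (Fin 3 →₀ ℕ) := fun x => Finsupp.equivFunOnFinite.symm ![x.1, x.2, 4 - x.1 - x.2]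
  let T := (Finset.range 5 ×ˢ Finset.range 5).filter (fun x => x.1 + x.2 ≤ 4)
  have hD : Set.InjOn D T := by
    intro x _ y _ hxy
    have h := congrArg (fun d : Fin 3 →₀ ℕ => (d : Fin 3 → ℕ)) hxy
    have h0 := congrFun h 0
    have h1 := congrFun h 1
    simp [D] at h0 h1
    exact Prod.ext h0 h1
  refine ⟨fun i j => coeff (D (i, j)) p, ?_⟩
  have hsub : p.support ⊆ T.image D := by
    intro d hd
    have hdeg : d.degree = 4 := by
      by_contra hne
      exact (mem_support_iff.1 hd) (hp.coeff_eq_zero hne)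
    have hs : d 0 + d 1 + d 2 = 4 := by
      rw [← hdeg, Finsupp.degree_eq_sum, Fin.sum_univ_three]
    rw [Finset.mem_image]
    refine ⟨(d 0, d 1), ?_, ?_⟩
    · simp only [T, Finset.mem_filter, Finset.mem_product, Finset.mem_range]
      omega
    · ext i
      fin_cases i <;> simp [D]
      omega
  have hmon : ∀ x, monomial (D x) (coeff (D x) p)
      = C (coeff (D x) p) * (X 0 ^ x.1 * X 1 ^ x.2 * X 2 ^ (4 - x.1 - x.2)) := by
    intro x
    rw [monomial_eq, Finsupp.prod_fintype _ _ (by simp), Fin.prod_univ_three]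
    simp [D]
  have e : p = ∑ x ∈ T, C (coeff (D x) p) * (X 0 ^ x.1 * X 1 ^ x.2 * X 2 ^ (4 - x.1 - x.2)) := by
    conv_lhs => rw [p.as_sum]
    rw [Finset.sum_subset hsub, Finset.sum_image hD]
    · exact Finset.sum_congr rfl fun x _ => hmon x
    · intro d _ hd
      rw [notMem_support_iff.1 hd, monomial_zero]
  conv_lhs => rw [e]
  simp only [T, Finset.sum_filter, Finset.sum_product, Finset.sum_range_succ, Finset.range_zero,
    Finset.sum_empty]
  norm_num
  simp only [H4]
  ring

lemma lin_ne_zero {l : Fin 3 → ℂ} (h : l ≠ 0) : lin l ≠ 0 := by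
  intro h0
  apply h
  have e : ∀ v : Fin 3 → ℂ, l 0 * v 0 + l 1 * v 1 + l 2 * v 2 = 0 := by
    intro v
    have := congrArg (eval v) h0
    simpa [lin] using this
  have e0 := e ![1, 0, 0]
  have e1 := e ![0, 1, 0]
  have e2 := e ![0, 0, 1]
  simp at e0 e1 e2
  ext i
  fin_cases i <;> simp [e0, e1, e2]

lemma lin_hom (l : Fin 3 → ℂ) : (lin l).IsHomogeneous 1 :=
  ((isHomogeneous_C_mul_X _ _).add (isHomogeneous_C_mul_X _ _)).add (isHomogeneous_C_mul_X _ _)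

lemma lin_irred {l : Fin 3 → ℂ} (h : l ≠ 0) : Irreducible (lin l) := by
  apply irreducible_of_totalDegree_eq_one
  · exact (lin_hom l).totalDegree (lin_ne_zero h)
  · intro x hx
    obtain ⟨d, hd⟩ := ne_zero_iff.1 (lin_ne_zero h)
    rw [isUnit_iff_ne_zero]
    rintro rfl
    exact hd (zero_dvd_iff.1 (hx d))

lemma extract (a b c : P3) (h : IsFoliation 4 a b c) (hz : InvLine a b c ![0, 0, 1]) :
    ∃ f g : ℕ → ℕ → ℂ, a = X 2 * H4 f ∧ b = X 2 * H4 g ∧ c = -(X 0 * H4 f + X 1 * H4 g) ∧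
      (¬ X 2 ∣ X 0 * H4 f + X 1 * H4 g) ∧ (∀ r : ℂ, C r * H4 f + H4 g ≠ 0) ∧
      (H4 f).IsHomogeneous 4 ∧ (H4 g).IsHomogeneous 4 := by
  obtain ⟨ha, hb, hc, hcop, heul⟩ := h
  obtain ⟨-, -, h2, h3⟩ := hz
  have hl : lin ![0, 0, 1] = X 2 := by simp [lin]
  rw [hl] at h2 h3
  simp at h2 h3
  obtain ⟨p, rfl⟩ := h2
  obtain ⟨q, rfl⟩ := h3
  have hhom : ∀ p : P3, (X 2 * p).IsHomogeneous (4 + 1) → p.IsHomogeneous 4 := by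
    intro p hp d hd
    rw [← coeff_X_mul d 2 p] at hd
    have := hp hd
    simp [Finsupp.weight_apply, Finsupp.sum_fintype, Fin.sum_univ_three, Finsupp.single_apply] at this ⊢
    omega
  obtain ⟨f, rfl⟩ := hom4_expand p (hhom p ha)
  obtain ⟨g, rfl⟩ := hom4_expand q (hhom q hb)
  have hX2 : (X 2 : P3) ≠ 0 := X_ne_zero 2
  have hcc : c = -(X 0 * H4 f + X 1 * H4 g) := by
    apply mul_left_cancel₀ hX2
    linear_combination heul
  refine ⟨f, g, rfl, rfl, hcc, ?_, ?_, hhom _ ha, hhom _ hb⟩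
  · intro hd
    have := hcop (X 2) (dvd_mul_right _ _) (dvd_mul_right _ _) (by rw [hcc]; exact hd.neg_right)
    exact (X_prime (R := ℂ) (i := (2 : Fin 3))).not_isUnit this
  · intro r hr
    have hg : H4 g = -(C r * H4 f) := by linear_combination hr
    have hu := hcop (H4 f) (dvd_mul_left _ _) (by rw [hg]; exact ⟨-(X 2 * C r), by ring⟩)
      (by rw [hcc, hg]; exact ⟨-(X 0 - X 1 * C r), by ring⟩)
    have h0 := (isUnit_iff_totalDegree_of_isReduced.1 hu).2
    have := (hhom _ ha).totalDegree hu.ne_zero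
    omega

lemma inv_fun {a b c : P3} {f g : ℕ → ℕ → ℂ} (ha : a = X 2 * H4 f) (hb : b = X 2 * H4 g)
    {l : Fin 3 → ℂ} (h : InvLine a b c l) (x y : ℂ) (hxy : l 0 * x + l 1 * y + l 2 = 0) :
    l 1 * h4 f x y = l 0 * h4 g x y := by
  obtain ⟨-, ⟨q, hq⟩, -, -⟩ := h
  have := congrArg (eval ![x, y, 1]) hq
  rw [ha, hb] at this
  simp [lin, eval_H4, hxy] at this
  linear_combination this

lemma inv_dvd {a b c : P3} {f g : ℕ → ℕ → ℂ} (ha : a = X 2 * H4 f) (hb : b = X 2 * H4 g)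
    {r e : ℂ} (h : InvLine a b c ![1, -r, -e]) :
    lin ![1, -r, -e] ∣ C r * H4 f + H4 g := by
  obtain ⟨h0, hd, -, -⟩ := h
  have hp : Prime (lin ![1, -r, -e]) := (lin_irred h0).prime
  have e1 : C ((![1, -r, -e] : Fin 3 → ℂ) 1) * a - C ((![1, -r, -e] : Fin 3 → ℂ) 0) * b
      = X 2 * (-(C r * H4 f + H4 g)) := by
    rw [ha, hb]; simp; ring
  rw [e1] at hd
  rcases hp.dvd_or_dvd hd with hd | hd
  · exfalso
    obtain ⟨q, hq⟩ := hd
    have := congrArg (eval ![e, 0, 1]) hq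
    simp [lin] at this
  · exact (dvd_neg.1 hd)

/-- Several parallel invariant lines. -/
lemma block_dvd {a b c : P3} {f g : ℕ → ℕ → ℂ} (ha : a = X 2 * H4 f) (hb : b = X 2 * H4 g)
    {ι : Type} (s : Finset ι) (r : ℂ) (e : ι → ℂ) (he : Set.InjOn e s)
    (h : ∀ i ∈ s, InvLine a b c ![1, -r, -e i]) :
    (∏ i ∈ s, lin ![1, -r, -e i]) ∣ C r * H4 f + H4 g := by
  apply Finset.prod_dvd_of_isRelPrime
  · intro i hi j hj hij
    show IsRelPrime (lin ![1, -r, -e i]) (lin ![1, -r, -e j])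
    rw [(lin_irred (h i hi).1).isRelPrime_iff_not_dvd]
    rintro ⟨q, hq⟩
    have := congrArg (eval ![e i, 0, 1]) hq
    simp [lin] at this
    exact hij (he hi hj (by linear_combination this))
  · exact fun i hi => inv_dvd ha hb (h i hi)

lemma block_card {a b c : P3} {f g : ℕ → ℕ → ℂ} (ha : a = X 2 * H4 f) (hb : b = X 2 * H4 g)
    (hf : (H4 f).IsHomogeneous 4) (hg : (H4 g).IsHomogeneous 4)
    {ι : Type} (s : Finset ι) (r : ℂ) (e : ι → ℂ) (he : Set.InjOn e s)
    (h : ∀ i ∈ s, InvLine a b c ![1, -r, -e i]) (hne : C r * H4 f + H4 g ≠ 0) :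
    s.card ≤ 4 := by
  obtain ⟨q, hq⟩ := block_dvd ha hb s r e he h
  have h1 : (C r * H4 f + H4 g).IsHomogeneous 4 := (hf.C_mul r).add hg
  have h2 : (∏ i ∈ s, lin ![1, -r, -e i]).IsHomogeneous (∑ i ∈ s, 1) :=
    IsHomogeneous.prod _ _ _ (fun i _ => lin_hom _)
  have hne' := hne
  rw [hq] at hne'
  have h3 := totalDegree_mul_of_isDomain (left_ne_zero_of_mul hne') (right_ne_zero_of_mul hne')
  rw [← hq, h1.totalDegree hne, h2.totalDegree (left_ne_zero_of_mul hne')] at h3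
  simp at h3
  omega

/-- The top part of the affine polynomial, as a univariate polynomial. -/
def top (f : ℕ → ℕ → ℂ) : Polynomial ℂ :=
  Polynomial.C (f 4 0) * Polynomial.X ^ 4 + Polynomial.C (f 3 1) * Polynomial.X ^ 3
  + Polynomial.C (f 2 2) * Polynomial.X ^ 2 + Polynomial.C (f 1 3) * Polynomial.X
  + Polynomial.C (f 0 4)

lemma top_deg (f : ℕ → ℕ → ℂ) : (top f).natDegree ≤ 4 := by
  unfold top
  compute_degree

lemma top_dvd {a b c : P3} {f g : ℕ → ℕ → ℂ} (ha : a = X 2 * H4 f) (hb : b = X 2 * H4 g)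
    {ι : Type} (s : Finset ι) (r : ℂ) (e : ι → ℂ) (he : Set.InjOn e s)
    (h : ∀ i ∈ s, InvLine a b c ![1, -r, -e i]) :
    (Polynomial.X - Polynomial.C r) ^ s.card ∣ Polynomial.C r * top f + top g := by
  have hd := block_dvd ha hb s r e he h
  have := map_dvd (aeval (![Polynomial.X, 1, 0] : Fin 3 → Polynomial ℂ)) hd
  simp only [map_prod, lin, H4, top, map_add, map_mul, map_pow, aeval_X, algHom_C] at this ⊢
  simp [Finset.prod_const] at this
  convert this using 2
  ring

lemma top_ne {f g : ℕ → ℕ → ℂ} (h : ¬ (X 2 : P3) ∣ X 0 * H4 f + X 1 * H4 g) :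
    Polynomial.X * top f + top g ≠ 0 := by
  intro h0
  apply h
  have e : ∀ n, (Polynomial.X * top f + top g).coeff n = 0 := by intro n; rw [h0]; simp
  have c0 := e 0
  have c1 := e 1
  have c2 := e 2
  have c3 := e 3
  have c4 := e 4
  have c5 := e 5
  simp [top, Polynomial.coeff_X, Polynomial.coeff_C, Polynomial.coeff_X_pow,
    Polynomial.coeff_X_mul] at c0 c1 c2 c3 c4 c5
  have d1 : g 1 3 = - f 0 4 := by linear_combination c1
  have d2 : g 2 2 = - f 1 3 := by linear_combination c2
  have d3 : g 3 1 = - f 2 2 := by linear_combination c3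
  have d4 : g 4 0 = - f 3 1 := by linear_combination c4
  simp only [H4, c0, d1, d2, d3, d4, c5, C_neg, C_0]
  refine ⟨X 0 * ((C (f 3 0) * X 0 ^ 3 + C (f 2 1) * X 0 ^ 2 * X 1 + C (f 1 2) * X 0 * X 1 ^ 2
      + C (f 0 3) * X 1 ^ 3)
    + X 2 * (C (f 2 0) * X 0 ^ 2 + C (f 1 1) * X 0 * X 1 + C (f 0 2) * X 1 ^ 2)
    + X 2 ^ 2 * (C (f 1 0) * X 0 + C (f 0 1) * X 1) + C (f 0 0) * X 2 ^ 3)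
    + X 1 * ((C (g 3 0) * X 0 ^ 3 + C (g 2 1) * X 0 ^ 2 * X 1 + C (g 1 2) * X 0 * X 1 ^ 2
      + C (g 0 3) * X 1 ^ 3)
    + X 2 * (C (g 2 0) * X 0 ^ 2 + C (g 1 1) * X 0 * X 1 + C (g 0 2) * X 1 ^ 2)
    + X 2 ^ 2 * (C (g 1 0) * X 0 + C (g 0 1) * X 1) + C (g 0 0) * X 2 ^ 3), ?_⟩
  ring

lemma exists_row (l : Fin 3 → ℂ) (h : l ≠ 0) :
    ∃ N : Matrix (Fin 3) (Fin 3) ℂ, N.det ≠ 0 ∧ Matrix.vecMul ![0, 0, 1] N = l := by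
  by_cases h2 : l 2 = 0
  · by_cases h1 : l 1 = 0
    · have h0 : l 0 ≠ 0 := by
        intro h0
        apply h
        ext i; fin_cases i <;> simp [h0, h1, h2]
      refine ⟨!![0, 1, 0; 0, 0, 1; l 0, l 1, l 2], ?_, ?_⟩
      · simp [Matrix.det_fin_three, h0]
      · ext i; fin_cases i <;> simp [Matrix.vecMul, dotProduct, Fin.sum_univ_three]
    · refine ⟨!![1, 0, 0; 0, 0, 1; l 0, l 1, l 2], ?_, ?_⟩
      · simp [Matrix.det_fin_three, h1]
      · ext i; fin_cases i <;> simp [Matrix.vecMul, dotProduct, Fin.sum_univ_three]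
  · refine ⟨!![1, 0, 0; 0, 1, 0; l 0, l 1, l 2], ?_, ?_⟩
    · simp [Matrix.det_fin_three, h2]
    · ext i; fin_cases i <;> simp [Matrix.vecMul, dotProduct, Fin.sum_univ_three]

/-- First chart: one invariant line is at infinity, the eleven others are not horizontal. -/
lemma chart1 (a b c : P3) (hfol : IsFoliation 4 a b c)
    (L : Fin 12 → (Fin 3 → ℂ)) (hL : ∀ i, InvLine a b c (L i))
    (hne : ∀ i j, i ≠ j → ∀ t : ℂ, L i ≠ t • L j) :
    ∃ a2 b2 c2 : P3, IsFoliation 4 a2 b2 c2 ∧ InvLine a2 b2 c2 ![0, 0, 1] ∧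
      (∃ r e : Fin 11 → ℂ, (∀ i, InvLine a2 b2 c2 ![1, -r i, -e i]) ∧
        ∀ i j, r i = r j → e i = e j → i = j) ∧
      ∀ a' b' c', LinConj3 a2 b2 c2 a' b' c' → LinConj3 a b c a' b' c' := by
  obtain ⟨N, hN, hrow⟩ := exists_row (L 0) (hL 0).1
  obtain ⟨a1, b1, c1, hf1, hl1, ht1⟩ := pull N hN a b c hfol
  have hinv : N⁻¹ * N = 1 := Matrix.nonsing_inv_mul _ (isUnit_iff_ne_zero.2 hN)
  set K : Fin 12 → (Fin 3 → ℂ) := fun i => Matrix.vecMul (L i) N⁻¹ with hK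
  have hKN : ∀ i, Matrix.vecMul (K i) N = L i := by
    intro i; simp [hK, Matrix.vecMul_vecMul, hinv]
  have hKne : ∀ i j, i ≠ j → ∀ t : ℂ, K i ≠ t • K j := by
    intro i j hij t h
    apply hne i j hij t
    rw [← hKN, ← hKN j, h, Matrix.smul_vecMul]
  have hKl : ∀ i, InvLine a1 b1 c1 (K i) := by
    intro i; apply hl1; rw [hKN]; exact hL i
  have hinv' : N * N⁻¹ = 1 := Matrix.mul_nonsing_inv _ (isUnit_iff_ne_zero.2 hN)
  have hK0 : K 0 = ![0, 0, 1] := by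
    simp only [hK]
    rw [← hrow, Matrix.vecMul_vecMul, hinv', Matrix.vecMul_one]
  obtain ⟨t, ht⟩ := Infinite.exists_notMem_finset
    (Finset.univ.image (fun i : Fin 12 => -(K i 0) / K i 1))
  have hden : ∀ i : Fin 11, K i.succ 0 + t * K i.succ 1 ≠ 0 := by
    intro i h
    by_cases h1 : K i.succ 1 = 0
    · have h0 : K i.succ 0 = 0 := by rw [h1] at h; simpa using h
      apply hKne i.succ 0 (Fin.succ_ne_zero i) (K i.succ 2)
      rw [hK0]
      ext j; fin_cases j <;> simp [h0, h1]
    · apply ht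
      rw [Finset.mem_image]
      refine ⟨i.succ, Finset.mem_univ _, ?_⟩
      field_simp
      linear_combination -h
  obtain ⟨a2, b2, c2, hf2, hl2, ht2⟩ := pull !![1, 0, 0; -t, 1, 0; 0, 0, 1]
    (by simp [Matrix.det_fin_three]) a1 b1 c1 hf1
  obtain ⟨D, hD⟩ : ∃ D : Fin 11 → ℂ, ∀ i, D i = K i.succ 0 + t * K i.succ 1 := ⟨_, fun _ => rfl⟩
  have hD0 : ∀ i, D i ≠ 0 := fun i => by rw [hD]; exact hden i
  refine ⟨a2, b2, c2, hf2, ?_, ⟨fun i => -K i.succ 1 / D i,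
    fun i => -K i.succ 2 / D i, ?_, ?_⟩, fun _ _ _ h => ht1 _ _ _ (ht2 _ _ _ h)⟩
  · apply hl2
    have := hKl 0
    rw [hK0] at this
    convert this using 1
    ext j; fin_cases j <;> simp [Matrix.vecMul, dotProduct, Fin.sum_univ_three]
  · intro i
    apply hl2
    convert (hKl i.succ).smul (inv_ne_zero (hD0 i)) using 1
    have := hD0 i
    ext j; fin_cases j <;> simp [Matrix.vecMul, dotProduct, Fin.sum_univ_three] <;> field_simp
    linear_combination hD i
  · intro i j h1 h2
    by_contra hij
    apply hKne i.succ j.succ (by simpa using hij)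
      (D i / D j)
    have d1 := hD0 i
    have d2 := hD0 j
    have E1 := hD i
    have E2 := hD j
    simp only at h1 h2
    field_simp at h1 h2
    ext m
    fin_cases m <;> simp <;> field_simp
    · linear_combination t * h1 + D i * E2 - D j * E1
    · linear_combination -h1
    · linear_combination -h2

/-- A block of `n` parallel invariant lines. -/
def Blk (a b c : P3) (r : ℂ) (n : ℕ) : Prop :=
  ∃ e : Fin n → ℂ, Function.Injective e ∧ ∀ i, InvLine a b c ![1, -r, -e i]

lemma types (a b c : P3) (h : IsFoliation 4 a b c) (hz : InvLine a b c ![0, 0, 1])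
    (r e : Fin 11 → ℂ) (hl : ∀ i, InvLine a b c ![1, -r i, -e i])
    (hne : ∀ i j, r i = r j → e i = e j → i = j) :
    ∃ ρ : Fin 5 → ℂ, Function.Injective ρ ∧ ∃ k : Fin 5 → ℕ, (∀ i, Blk a b c (ρ i) (k i)) ∧
      ((k 0 = 1 ∧ k 1 = 1 ∧ k 2 = 1 ∧ k 3 = 4 ∧ k 4 = 4) ∨
       (k 0 = 1 ∧ k 1 = 1 ∧ k 2 = 2 ∧ k 3 = 3 ∧ k 4 = 4) ∨
       (k 0 = 1 ∧ k 1 = 2 ∧ k 2 = 2 ∧ k 3 = 2 ∧ k 4 = 4) ∨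
       (k 0 = 1 ∧ k 1 = 1 ∧ k 2 = 3 ∧ k 3 = 3 ∧ k 4 = 3) ∨
       (k 0 = 1 ∧ k 1 = 2 ∧ k 2 = 2 ∧ k 3 = 3 ∧ k 4 = 3)) := by
  obtain ⟨f, g, ha, hb, hc, htop, hpen, hf, hg⟩ := extract a b c h hz
  classical
  set S : ℂ → Finset (Fin 11) := fun x => Finset.univ.filter (fun i => r i = x) with hS
  have hinj : ∀ x, Set.InjOn e (S x) := by
    intro x i hi j hj hij
    simp [hS] at hi hj
    exact hne i j (hi.trans hj.symm) hij
  have hSl : ∀ x, ∀ i ∈ S x, InvLine a b c ![1, -x, -e i] := by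
    intro x i hi
    simp [hS] at hi
    rw [← hi]; exact hl i
  set R := Finset.univ.image r with hR
  have hk1 : ∀ x ∈ R, 1 ≤ (S x).card := by
    intro x hx
    simp only [hR, Finset.mem_image, Finset.mem_univ, true_and] at hx
    obtain ⟨i, hi⟩ := hx
    exact Finset.card_pos.2 ⟨i, by simp [hS, hi]⟩
  have hk4 : ∀ x ∈ R, (S x).card ≤ 4 := fun x _ =>
    block_card ha hb hf hg (S x) x e (hinj x) (hSl x) (hpen x)
  have hsum : ∑ x ∈ R, (S x).card = 11 := by
    have := Finset.card_eq_sum_card_image r (Finset.univ : Finset (Fin 11))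
    simpa using this.symm
  obtain ⟨h5, h2⟩ := type_card (top f) (top g) (top_deg f) (top_deg g) (top_ne htop) R
    (fun x => (S x).card) hk1 hk4 hsum
    (fun x _ => top_dvd ha hb (S x) x e (hinj x) (hSl x))
  obtain ⟨ρ, hρ, hcase⟩ := type_list R (fun x => (S x).card) h5 hk1 hk4 hsum h2
  refine ⟨ρ, hρ, fun i => (S (ρ i)).card, ?_, hcase⟩
  intro i
  let φ := (S (ρ i)).equivFin.symm
  refine ⟨fun j => e (φ j), ?_, fun j => hSl _ _ (φ j).2⟩
  intro j j' hjj
  exact φ.injective (Subtype.ext (hinj _ (φ j).2 (φ j').2 hjj))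

/-- Second chart. -/
lemma chart2 (a b c : P3) (h : IsFoliation 4 a b c) (hz : InvLine a b c ![0, 0, 1])
    {ρ₁ ρ₂ : ℂ} (hρ : ρ₁ ≠ ρ₂) {n₁ n₂ : ℕ} (hn₁ : n₁ ≠ 0) (hn₂ : n₂ ≠ 0)
    (B₁ : Blk a b c ρ₁ n₁) (B₂ : Blk a b c ρ₂ n₂) {κ : ℂ} (hκ : κ ≠ 0) :
    ∃ a2 b2 c2 : P3, IsFoliation 4 a2 b2 c2 ∧ InvLine a2 b2 c2 ![0, 0, 1] ∧
      (∃ e : Fin n₁ → ℂ, Function.Injective e ∧ ∑ i, e i = 0 ∧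
        ∀ i, InvLine a2 b2 c2 ![0, 1, -e i]) ∧
      (∃ e : Fin n₂ → ℂ, Function.Injective e ∧ ∑ i, e i = 0 ∧
        ∀ i, InvLine a2 b2 c2 ![1, 0, -e i]) ∧
      (∀ ρ n, ρ ≠ ρ₁ → Blk a b c ρ n → Blk a2 b2 c2 (κ * (ρ - ρ₂) / (ρ - ρ₁)) n) ∧
      ∀ a' b' c', LinConj3 a2 b2 c2 a' b' c' → LinConj3 a b c a' b' c' := by
  obtain ⟨e₁, hi₁, hl₁⟩ := B₁
  obtain ⟨e₂, hi₂, hl₂⟩ := B₂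
  set m₁ : ℂ := (∑ i, e₁ i) / n₁
  set m₂ : ℂ := (∑ i, e₂ i) / n₂
  have h12 : ρ₁ - ρ₂ ≠ 0 := sub_ne_zero.2 hρ
  have hn₁' : (n₁ : ℂ) ≠ 0 := by exact_mod_cast hn₁
  have hn₂' : (n₂ : ℂ) ≠ 0 := by exact_mod_cast hn₂
  obtain ⟨a2, b2, c2, hf2, hl2, ht2⟩ := pull
    !![κ, -κ * ρ₂, -κ * m₂; 1, -ρ₁, -m₁; 0, 0, 1]
    (by
      simp only [Matrix.det_fin_three]
      simp
      intro h0
      have : κ * (ρ₁ - ρ₂) = 0 := by linear_combination -h0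
      exact mul_ne_zero hκ h12 this) a b c h
  refine ⟨a2, b2, c2, hf2, ?_, ⟨fun i => e₁ i - m₁, ?_, ?_, ?_⟩,
    ⟨fun i => κ * (e₂ i - m₂), ?_, ?_, ?_⟩, ?_, ht2⟩
  · apply hl2
    convert hz using 1
    ext j; fin_cases j <;> simp [Matrix.vecMul, dotProduct, Fin.sum_univ_three]
  · intro i j hij
    exact hi₁ (by simpa using hij)
  · simp [Finset.sum_sub_distrib, m₁]; field_simp; simp
  · intro i
    apply hl2
    convert hl₁ i using 1
    ext j; fin_cases j <;> simp [Matrix.vecMul, dotProduct, Fin.sum_univ_three]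
    ring
  · intro i j hij
    apply hi₂
    have := mul_left_cancel₀ hκ hij
    simpa using this
  · rw [← Finset.mul_sum]; simp [Finset.sum_sub_distrib, m₂]; right; field_simp; simp
  · intro i
    apply hl2
    convert (hl₂ i).smul hκ using 1
    ext j; fin_cases j <;> simp [Matrix.vecMul, dotProduct, Fin.sum_univ_three]
    ring
  · rintro ρ n hρn ⟨e, hi, hl⟩
    have hd : ρ - ρ₁ ≠ 0 := sub_ne_zero.2 hρn
    -- `x - ρ y - e z = u (x - ρ₂ y) + v (x - ρ₁ y) - e z`
    refine ⟨fun i => κ * (-(e i) * (ρ₁ - ρ₂) + (ρ - ρ₂) * m₁ - (ρ - ρ₁) * m₂) / (ρ - ρ₁), ?_, ?_⟩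
    · intro i j hij
      apply hi
      simp only at hij
      field_simp at hij
      have : (ρ₁ - ρ₂) * (e i - e j) = 0 := by linear_combination -hij
      have := (mul_eq_zero.1 this).resolve_left h12
      linear_combination this
    · intro i
      apply hl2
      convert (hl i).smul (t := -κ * (ρ₁ - ρ₂) / (ρ - ρ₁)) (by
        apply div_ne_zero _ hd; simp [hκ, h12]) using 1
      ext j; fin_cases j <;> simp [Matrix.vecMul, dotProduct, Fin.sum_univ_three] <;> field_simp <;> ring

lemma quad3 {a b c : ℂ} (e : Fin 3 → ℂ) (he : Function.Injective e)
    (h : ∀ i, a * e i ^ 2 + b * e i + c = 0) : a = 0 ∧ b = 0 ∧ c = 0 := by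
  have := Polynomial.eq_zero_of_natDegree_lt_card_of_eval_eq_zero
    (Polynomial.C a * Polynomial.X ^ 2 + Polynomial.C b * Polynomial.X + Polynomial.C c) he
    (by intro i; simpa using h i)
    (lt_of_le_of_lt (b := 2) (by compute_degree) (by simp))
  have c0 := congrArg (fun p => Polynomial.coeff p 0) this
  have c1 := congrArg (fun p => Polynomial.coeff p 1) this
  have c2 := congrArg (fun p => Polynomial.coeff p 2) this
  simp [Polynomial.coeff_X, Polynomial.coeff_C, Polynomial.coeff_X_pow] at c0 c1 c2
  exact ⟨c2, c1, c0⟩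

lemma cub4 {d a b c : ℂ} (e : Fin 4 → ℂ) (he : Function.Injective e)
    (h : ∀ i, d * e i ^ 3 + a * e i ^ 2 + b * e i + c = 0) : d = 0 ∧ a = 0 ∧ b = 0 ∧ c = 0 := by
  have := Polynomial.eq_zero_of_natDegree_lt_card_of_eval_eq_zero
    (Polynomial.C d * Polynomial.X ^ 3 + Polynomial.C a * Polynomial.X ^ 2
      + Polynomial.C b * Polynomial.X + Polynomial.C c) he
    (by intro i; simpa using h i)
    (lt_of_le_of_lt (b := 3) (by compute_degree) (by simp))
  have c0 := congrArg (fun p => Polynomial.coeff p 0) this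
  have c1 := congrArg (fun p => Polynomial.coeff p 1) this
  have c2 := congrArg (fun p => Polynomial.coeff p 2) this
  have c3 := congrArg (fun p => Polynomial.coeff p 3) this
  simp [Polynomial.coeff_X, Polynomial.coeff_C, Polynomial.coeff_X_pow] at c0 c1 c2 c3
  exact ⟨c3, c2, c1, c0⟩

lemma quart0 (c4 c3 c2 c1 c0 : ℂ)
    (h : ∀ y : ℂ, c4 * y ^ 4 + c3 * y ^ 3 + c2 * y ^ 2 + c1 * y + c0 = 0) :
    c4 = 0 ∧ c3 = 0 ∧ c2 = 0 ∧ c1 = 0 ∧ c0 = 0 := by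
  have h0 := h 0
  have h1 := h 1
  have h2 := h (-1)
  have h3 := h 2
  have h4 := h (-2)
  have e0 : c0 = 0 := by linear_combination h0
  have e4 : c4 = 0 := by
    linear_combination (1/24) * (h3 + h4) - (1/6) * (h1 + h2) + (1/4) * h0
  have e2 : c2 = 0 := by linear_combination (1/2) * (h1 + h2) - h0 - e4
  have e3 : c3 = 0 := by linear_combination (1/12) * (h3 - h4) - (1/6) * (h1 - h2)
  have e1 : c1 = 0 := by linear_combination (1/2) * (h1 - h2) - e3
  exact ⟨e4, e3, e2, e1, e0⟩

lemma sum4 (e : Fin 4 → ℂ) (hs : ∑ i, e i = 0) :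
    ∃ p q r : ℂ, ∀ i, e i ^ 4 + p * e i ^ 2 + q * e i + r = 0 := by
  rw [Fin.sum_univ_four] at hs
  refine ⟨e 0 * e 1 + e 0 * e 2 + e 0 * e 3 + e 1 * e 2 + e 1 * e 3 + e 2 * e 3,
    -(e 0 * e 1 * e 2 + e 0 * e 1 * e 3 + e 0 * e 2 * e 3 + e 1 * e 2 * e 3),
    e 0 * e 1 * e 2 * e 3, ?_⟩
  intro i
  fin_cases i <;> simp only [Fin.zero_eta, Fin.mk_one, Fin.reduceFinMk]
  · linear_combination e 0 ^ 3 * hs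
  · linear_combination e 1 ^ 3 * hs
  · linear_combination e 2 ^ 3 * hs
  · linear_combination e 3 ^ 3 * hs

lemma sum3 (e : Fin 3 → ℂ) (hs : ∑ i, e i = 0) :
    ∃ p q : ℂ, ∀ i, e i ^ 3 + p * e i + q = 0 := by
  rw [Fin.sum_univ_three] at hs
  refine ⟨e 0 * e 1 + e 0 * e 2 + e 1 * e 2, -(e 0 * e 1 * e 2), ?_⟩
  intro i
  fin_cases i <;> simp only [Fin.zero_eta, Fin.mk_one, Fin.reduceFinMk]
  · linear_combination e 0 ^ 2 * hs
  · linear_combination e 1 ^ 2 * hs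
  · linear_combination e 2 ^ 2 * hs

/-- Splitting the vanishing of `h4 f` on horizontal lines into coefficients. -/
lemma h4_split {f : ℕ → ℕ → ℂ} {y : ℂ} (h : ∀ x, h4 f x y = 0) :
    f 4 0 = 0 ∧ f 3 1 * y + f 3 0 = 0 ∧ f 2 2 * y ^ 2 + f 2 1 * y + f 2 0 = 0 ∧
    f 1 3 * y ^ 3 + f 1 2 * y ^ 2 + f 1 1 * y + f 1 0 = 0 ∧
    f 0 4 * y ^ 4 + f 0 3 * y ^ 3 + f 0 2 * y ^ 2 + f 0 1 * y + f 0 0 = 0 := by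
  apply quart0
  intro x
  have := h x
  unfold h4 at this
  linear_combination this

lemma V4 {f : ℕ → ℕ → ℂ} (e : Fin 4 → ℂ) (he : Function.Injective e) (hs : ∑ i, e i = 0)
    (h : ∀ i x, h4 f x (e i) = 0) :
    ∃ p q r : ℂ, (∀ i, e i ^ 4 + p * e i ^ 2 + q * e i + r = 0) ∧
      f 4 0 = 0 ∧ f 3 1 = 0 ∧ f 3 0 = 0 ∧ f 2 2 = 0 ∧ f 2 1 = 0 ∧ f 2 0 = 0 ∧
      f 1 3 = 0 ∧ f 1 2 = 0 ∧ f 1 1 = 0 ∧ f 1 0 = 0 ∧ f 0 3 = 0 ∧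
      f 0 2 = f 0 4 * p ∧ f 0 1 = f 0 4 * q ∧ f 0 0 = f 0 4 * r := by
  obtain ⟨p, q, r, hr⟩ := sum4 e hs
  have hsp := fun i => h4_split (h i)
  obtain ⟨-, -, a1, a2⟩ := cub4 (d := 0) (a := 0) (b := f 3 1) (c := f 3 0) e he
    (fun i => by linear_combination (hsp i).2.1)
  obtain ⟨-, b1, b2, b3⟩ := cub4 (d := 0) (a := f 2 2) (b := f 2 1) (c := f 2 0) e he
    (fun i => by linear_combination (hsp i).2.2.1)
  obtain ⟨c1, c2, c3, c4⟩ := cub4 e he (fun i => (hsp i).2.2.2.1)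
  obtain ⟨d1, d2, d3, d4⟩ := cub4 (d := f 0 3) (a := f 0 2 - f 0 4 * p) (b := f 0 1 - f 0 4 * q)
    (c := f 0 0 - f 0 4 * r) e he
    (fun i => by linear_combination (hsp i).2.2.2.2 - f 0 4 * hr i)
  exact ⟨p, q, r, hr, (hsp 0).1, a1, a2, b1, b2, b3, c1, c2, c3, c4, d1, sub_eq_zero.1 d2,
    sub_eq_zero.1 d3, sub_eq_zero.1 d4⟩

lemma V3 {f : ℕ → ℕ → ℂ} (e : Fin 3 → ℂ) (he : Function.Injective e) (hs : ∑ i, e i = 0)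
    (h : ∀ i x, h4 f x (e i) = 0) :
    ∃ p q : ℂ, (∀ i, e i ^ 3 + p * e i + q = 0) ∧
      f 4 0 = 0 ∧ f 3 1 = 0 ∧ f 3 0 = 0 ∧ f 2 2 = 0 ∧ f 2 1 = 0 ∧ f 2 0 = 0 ∧
      f 1 2 = 0 ∧ f 1 1 = f 1 3 * p ∧ f 1 0 = f 1 3 * q ∧
      f 0 2 = f 0 4 * p ∧ f 0 1 = f 0 3 * p + f 0 4 * q ∧ f 0 0 = f 0 3 * q := by
  obtain ⟨p, q, hr⟩ := sum3 e hs
  have hsp := fun i => h4_split (h i)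
  obtain ⟨-, a1, a2⟩ := quad3 (a := 0) (b := f 3 1) (c := f 3 0) e he
    (fun i => by linear_combination (hsp i).2.1)
  obtain ⟨b1, b2, b3⟩ := quad3 e he (fun i => (hsp i).2.2.1)
  obtain ⟨c1, c2, c3⟩ := quad3 (a := f 1 2) (b := f 1 1 - f 1 3 * p) (c := f 1 0 - f 1 3 * q) e he
    (fun i => by linear_combination (hsp i).2.2.2.1 - f 1 3 * hr i)
  obtain ⟨d1, d2, d3⟩ := quad3 (a := f 0 2 - f 0 4 * p) (b := f 0 1 - (f 0 3 * p + f 0 4 * q))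
    (c := f 0 0 - f 0 3 * q) e he
    (fun i => by linear_combination (hsp i).2.2.2.2 - (f 0 4 * e i + f 0 3) * hr i)
  exact ⟨p, q, hr, (hsp 0).1, a1, a2, b1, b2, b3, c1, sub_eq_zero.1 c2,
    sub_eq_zero.1 c3, sub_eq_zero.1 d1, sub_eq_zero.1 d2, sub_eq_zero.1 d3⟩

/-- Swapping the two variables. -/
def sw (g : ℕ → ℕ → ℂ) : ℕ → ℕ → ℂ := fun i j => g j i

lemma h4_sw (g : ℕ → ℕ → ℂ) (x y : ℂ) : h4 (sw g) y x = h4 g x y := by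
  simp only [h4, sw]; ring

section lines
variable {a b c : P3} {f g : ℕ → ℕ → ℂ}

lemma line_y (ha : a = X 2 * H4 f) (hb : b = X 2 * H4 g) {e : ℂ}
    (h : InvLine a b c ![0, 1, -e]) (x : ℂ) : h4 f x e = 0 := by
  have := inv_fun ha hb h x e (by simp)
  simpa using this

lemma line_x (ha : a = X 2 * H4 f) (hb : b = X 2 * H4 g) {e : ℂ}
    (h : InvLine a b c ![1, 0, -e]) (y : ℂ) : h4 (sw g) y e = 0 := by
  have := inv_fun ha hb h e y (by simp)
  rw [h4_sw]
  simpa using this.symm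

lemma line_r (ha : a = X 2 * H4 f) (hb : b = X 2 * H4 g) {r e : ℂ}
    (h : InvLine a b c ![1, -r, -e]) (y : ℂ) :
    r * h4 f (r * y + e) y + h4 g (r * y + e) y = 0 := by
  have := inv_fun ha hb h (r * y + e) y (by simp)
  simp at this
  linear_combination -this

end lines

set_option linter.unusedSimpArgs false


lemma compM_pow (M : Matrix (Fin 3) (Fin 3) ℂ) (p : P3) (n : ℕ) :
    compM M (p ^ n) = compM M p ^ n := by simp only [compM, map_pow]
lemma compM_neg (M : Matrix (Fin 3) (Fin 3) ℂ) (p : P3) :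
    compM M (-p) = -compM M p := by simp only [compM, map_neg]
lemma compM_two (M : Matrix (Fin 3) (Fin 3) ℂ) : compM M 2 = 2 := map_ofNat _ 2
lemma compM_three (M : Matrix (Fin 3) (Fin 3) ℂ) : compM M 3 = 3 := map_ofNat _ 3
lemma compM_four (M : Matrix (Fin 3) (Fin 3) ℂ) : compM M 4 = 4 := map_ofNat _ 4
lemma C_two : (C 2 : P3) = 2 := map_ofNat C 2
lemma C_three : (C 3 : P3) = 3 := map_ofNat C 3
lemma C_four : (C 4 : P3) = 4 := map_ofNat C 4
lemma C_thirtytwo : (C 32 : P3) = 32 := map_ofNat C 32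

section explicit
variable (m00 m01 m02 m10 m11 m12 m20 m21 m22 : ℂ)

lemma compM_X0 : compM !![m00, m01, m02; m10, m11, m12; m20, m21, m22] (X 0) =
    C m00 * X 0 + C m01 * X 1 + C m02 * X 2 := compM_X _ 0
lemma compM_X1 : compM !![m00, m01, m02; m10, m11, m12; m20, m21, m22] (X 1) =
    C m10 * X 0 + C m11 * X 1 + C m12 * X 2 := compM_X _ 1
lemma compM_X2 : compM !![m00, m01, m02; m10, m11, m12; m20, m21, m22] (X 2) =
    C m20 * X 0 + C m21 * X 1 + C m22 * X 2 := compM_X _ 2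

variable (a b c : P3)
lemma pull0 : pullbackM !![m00, m01, m02; m10, m11, m12; m20, m21, m22] a b c 0 =
    C m00 * compM !![m00, m01, m02; m10, m11, m12; m20, m21, m22] a +
    C m10 * compM !![m00, m01, m02; m10, m11, m12; m20, m21, m22] b +
    C m20 * compM !![m00, m01, m02; m10, m11, m12; m20, m21, m22] c := rfl
lemma pull1 : pullbackM !![m00, m01, m02; m10, m11, m12; m20, m21, m22] a b c 1 =
    C m01 * compM !![m00, m01, m02; m10, m11, m12; m20, m21, m22] a +
    C m11 * compM !![m00, m01, m02; m10, m11, m12; m20, m21, m22] b +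
    C m21 * compM !![m00, m01, m02; m10, m11, m12; m20, m21, m22] c := rfl
lemma pull2 : pullbackM !![m00, m01, m02; m10, m11, m12; m20, m21, m22] a b c 2 =
    C m02 * compM !![m00, m01, m02; m10, m11, m12; m20, m21, m22] a +
    C m12 * compM !![m00, m01, m02; m10, m11, m12; m20, m21, m22] b +
    C m22 * compM !![m00, m01, m02; m10, m11, m12; m20, m21, m22] c := rfl

end explicit

lemma caseA (a b c : P3) (h : IsFoliation 4 a b c) (hz : InvLine a b c ![0, 0, 1])
    (hV : ∃ e : Fin 4 → ℂ, Function.Injective e ∧ ∑ i, e i = 0 ∧ ∀ i, InvLine a b c ![0, 1, -e i])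
    (hH : ∃ e : Fin 4 → ℂ, Function.Injective e ∧ ∑ i, e i = 0 ∧ ∀ i, InvLine a b c ![1, 0, -e i])
    {r r' : ℂ} (hr : r ≠ 0) (hr' : r' ≠ 0) (hrr : r ≠ r') (B : Blk a b c r 1)
    (B' : Blk a b c r' 1) : LinConj3 a b c aF bF cF := by
  obtain ⟨f, g, ha, hb, hc, htop, -, -, -⟩ := extract a b c h hz
  have hne := top_ne htop
  obtain ⟨e, he, hs, hl⟩ := hV
  obtain ⟨e', he', hs', hl'⟩ := hH
  obtain ⟨p, q, s, hroot, f40, f31, f30, f22, f21, f20, f13, f12, f11, f10, f03, f02, f01, f00⟩ :=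
    V4 e he hs (fun i x => line_y ha hb (hl i) x)
  obtain ⟨p', q', s', hroot', g04, g13, g03, g22, g12, g02, g31, g21, g11, g01, g30, g20, g10, g00⟩ :=
    V4 e' he' hs' (fun i x => line_x ha hb (hl' i) x)
  simp only [sw] at g04 g13 g03 g22 g12 g02 g31 g21 g11 g01 g30 g20 g10 g00
  obtain ⟨A, hA⟩ : ∃ A, f 0 4 = A := ⟨_, rfl⟩
  obtain ⟨D, hD⟩ : ∃ D, g 4 0 = D := ⟨_, rfl⟩
  rw [hA] at f02 f01 f00
  rw [hD] at g20 g10 g00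
  have hF : ∀ x y, h4 f x y = A * (y ^ 4 + p * y ^ 2 + q * y + s) := by
    intro x y
    simp only [h4, f40, f31, f30, f22, f21, f20, f13, f12, f11, f10, f03, f02, f01, f00, hA]; ring
  have hG : ∀ x y, h4 g x y = D * (x ^ 4 + p' * x ^ 2 + q' * x + s') := by
    intro x y
    simp only [h4, g04, g13, g03, g22, g12, g02, g31, g21, g11, g01, g30, g20, g10, g00, hD]; ring
  have key : ∀ r : ℂ, r ≠ 0 → Blk a b c r 1 → D ≠ 0 ∧ A = -(D * r ^ 3) ∧ p' = r ^ 2 * p ∧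
      q' = r ^ 3 * q ∧ s' = r ^ 4 * s := by
    rintro r hr ⟨m, -, hm⟩
    have hm := hm 0
    generalize m 0 = n at hm
    have hL := line_r ha hb hm
    simp only [hF, hG] at hL
    obtain ⟨k4, k3, k2, k1, k0⟩ := quart0 (r * A + D * r ^ 4) (D * (4 * r ^ 3 * n))
      (r * A * p + D * (6 * r ^ 2 * n ^ 2 + p' * r ^ 2))
      (r * A * q + D * (4 * r * n ^ 3 + 2 * p' * r * n + q' * r))
      (r * A * s + D * (n ^ 4 + p' * n ^ 2 + q' * n + s'))
      (fun y => by linear_combination hL y)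
    have hAD : A = -(D * r ^ 3) := by
      apply mul_left_cancel₀ hr
      linear_combination k4
    have hD0 : D ≠ 0 := by
      intro hD0
      rw [hD0] at hAD
      apply hne
      simp [top, f40, f31, f22, f13, hA, hAD, g31, g22, g13, g04, hD, hD0]
    have hn : n = 0 := by simpa [hD0, hr] using k3
    subst hn
    subst hAD
    refine ⟨hD0, rfl, ?_, ?_, ?_⟩
    · apply mul_left_cancel₀ (mul_ne_zero hD0 (pow_ne_zero 2 hr))
      linear_combination k2
    · apply mul_left_cancel₀ (mul_ne_zero hD0 hr)
      linear_combination k1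
    · apply mul_left_cancel₀ hD0
      linear_combination k0
  obtain ⟨hD0, h1, h2, h3, h4'⟩ := key r hr B
  obtain ⟨-, t1, t2, t3, t4⟩ := key r' hr' B'
  have hcube : r ^ 3 = r' ^ 3 := by
    apply mul_left_cancel₀ hD0
    linear_combination h1 - t1
  have hd : r - r' ≠ 0 := sub_ne_zero.2 hrr
  have hp : p = 0 := by
    by_contra hp
    have h22 : r ^ 2 = r' ^ 2 := by
      apply mul_right_cancel₀ hp
      linear_combination t2 - h2
    apply hd
    have : r ^ 2 * (r - r') = 0 := by linear_combination hcube - r' * h22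
    simpa [hr] using this
  have hs0 : s = 0 := by
    have : r ^ 3 * (r - r') * s = 0 := by linear_combination t4 - h4' - r' * s * hcube
    simpa [hr, hd] using this
  have hp' : p' = 0 := by rw [h2, hp]; ring
  have hs0' : s' = 0 := by rw [h4', hs0]; ring
  have hq : q ≠ 0 := by
    intro hq
    have z : ∀ i, e i = 0 := by
      intro i
      have := hroot i
      simpa [hp, hq, hs0] using this
    have := he ((z 0).trans (z 1).symm)
    simp at this
  obtain ⟨μ, hμ⟩ := IsAlgClosed.exists_pow_nat_eq (-q) (n := 3) (by norm_num)
  have hμ0 : μ ≠ 0 := by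
    rintro rfl
    apply hq
    linear_combination hμ
  have hqμ : q = -μ ^ 3 := by rw [hμ, neg_neg]
  have eA : H4 f = -(C D * C r ^ 3) * (X 1 ^ 4 - C μ ^ 3 * X 1 * X 2 ^ 3) := by
    simp only [H4, f40, f31, f30, f22, f21, f20, f13, f12, f11, f10, f03, f02, f01, f00, hA, h1,
      hp, hs0, hqμ, map_neg, map_mul, map_pow, map_zero]
    ring
  have eB : H4 g = C D * (X 0 ^ 4 - C r ^ 3 * C μ ^ 3 * X 0 * X 2 ^ 3) := by
    simp only [H4, g04, g13, g03, g22, g12, g02, g31, g21, g11, g01, g30, g20, g10, g00, hD,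
      hp', hs0', h3, hqμ, map_neg, map_mul, map_pow, map_zero]
    ring
  refine ⟨!![r * μ, 0, 0; 0, μ, 0; 0, 0, 1], ?_, D * r ^ 4 * μ ^ 5, ?_, ?_, ?_, ?_⟩
  · simp [Matrix.det_fin_three, hr, hμ0]
  · simp [hD0, hr, hμ0]
  all_goals
    rw [hc, ha, hb, eA, eB]
    simp only [pull0, pull1, pull2, compM_add, compM_sub, compM_mul, compM_neg, compM_pow, compM_C,
      compM_X0, compM_X1, compM_X2, compM_two, compM_three, compM_four, map_mul, map_pow, map_neg,
      map_zero, map_one, C_two, C_three, C_four, C_thirtytwo, aF, bF, cF]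
    ring

lemma caseB (a b c : P3) (h : IsFoliation 4 a b c) (hz : InvLine a b c ![0, 0, 1])
    (hV : ∃ e : Fin 4 → ℂ, Function.Injective e ∧ ∑ i, e i = 0 ∧ ∀ i, InvLine a b c ![0, 1, -e i])
    (hH : ∃ e : Fin 1 → ℂ, Function.Injective e ∧ ∑ i, e i = 0 ∧ ∀ i, InvLine a b c ![1, 0, -e i])
    (ρ : Fin 3 → ℂ) (hρ : Function.Injective ρ) (hρ0 : ∀ i, ρ i ≠ 0) (hρ1 : ρ 0 = 1)
    (B : ∀ i, Blk a b c (ρ i) 2) : LinConj3 a b c aF bF cF := by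
  obtain ⟨f, g, ha, hb, hc, htop, -, -, -⟩ := extract a b c h hz
  have hne := top_ne htop
  obtain ⟨e, he, hs, hl⟩ := hV
  obtain ⟨e', he', hs', hl'⟩ := hH
  obtain ⟨p, q, s, hroot, f40, f31, f30, f22, f21, f20, f13, f12, f11, f10, f03, f02, f01, f00⟩ :=
    V4 e he hs (fun i x => line_y ha hb (hl i) x)
  have hz0 : e' 0 = 0 := by simpa using hs'
  obtain ⟨g04, g03, g02, g01, g00⟩ := h4_split (fun x => line_x ha hb (hl' 0) x)
  rw [hz0] at g03 g02 g01 g00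
  simp [sw] at g04 g03 g02 g01 g00
  obtain ⟨A, hA⟩ : ∃ A, f 0 4 = A := ⟨_, rfl⟩
  rw [hA] at f02 f01 f00
  have hF : ∀ x y, h4 f x y = A * (y ^ 4 + p * y ^ 2 + q * y + s) := by
    intro x y
    simp only [h4, f40, f31, f30, f22, f21, f20, f13, f12, f11, f10, f03, f02, f01, f00, hA]; ring
  have key1 : ∀ i, ∃ n : ℂ, n ≠ 0 ∧
      A + g 4 0 * ρ i ^ 3 + g 3 1 * ρ i ^ 2 + g 2 2 * ρ i + g 1 3 = 0 ∧
      4 * g 4 0 * ρ i ^ 3 + 3 * g 3 1 * ρ i ^ 2 + 2 * g 2 2 * ρ i + g 1 3 = 0 ∧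
      g 3 0 * ρ i ^ 2 + g 2 1 * ρ i + g 1 2 = 0 ∧
      ∃ n', n' ≠ n ∧ ∀ x, x = n ∨ x = n' → ∀ y, ρ i * h4 f (ρ i * y + x) y + h4 g (ρ i * y + x) y = 0 := by
    intro i
    obtain ⟨m, hm, hm'⟩ := B i
    have hr := hρ0 i
    generalize ρ i = r at *
    have E : ∀ j, A + g 4 0 * r ^ 3 + g 3 1 * r ^ 2 + g 2 2 * r + g 1 3 = 0 ∧
        m j * (4 * g 4 0 * r ^ 3 + 3 * g 3 1 * r ^ 2 + 2 * g 2 2 * r + g 1 3) +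
          r * (g 3 0 * r ^ 2 + g 2 1 * r + g 1 2) = 0 := by
      intro j
      have hL := line_r ha hb (hm' j)
      generalize m j = n at hL
      have hL2 := hL
      simp only [hF] at hL2
      simp only [h4, g04, g03, g02, g01, g00] at hL2
      obtain ⟨k4, k3, k2, k1, k0⟩ := quart0
        (r * (A + g 4 0 * r ^ 3 + g 3 1 * r ^ 2 + g 2 2 * r + g 1 3))
        (n * (4 * g 4 0 * r ^ 3 + 3 * g 3 1 * r ^ 2 + 2 * g 2 2 * r + g 1 3) +
          r * (g 3 0 * r ^ 2 + g 2 1 * r + g 1 2))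
        (r * A * p + g 4 0 * 6 * r ^ 2 * n ^ 2 + g 3 1 * 3 * r * n ^ 2 + g 2 2 * n ^ 2 +
          g 3 0 * 3 * r ^ 2 * n + g 2 1 * 2 * r * n + g 1 2 * n + g 2 0 * r ^ 2 + g 1 1 * r)
        (r * A * q + g 4 0 * 4 * r * n ^ 3 + g 3 1 * n ^ 3 + g 3 0 * 3 * r * n ^ 2 + g 2 1 * n ^ 2
          + g 2 0 * 2 * r * n + g 1 1 * n + g 1 0 * r)
        (r * A * s + g 4 0 * n ^ 4 + g 3 0 * n ^ 3 + g 2 0 * n ^ 2 + g 1 0 * n)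
        (fun y => by linear_combination hL2 y)
      exact ⟨(mul_eq_zero.1 k4).resolve_left hr, k3⟩
    have hm01 : m 0 - m 1 ≠ 0 := by
      intro h0
      have := hm (sub_eq_zero.1 h0)
      simp at this
    obtain ⟨T, hT⟩ : ∃ T, T = 4 * g 4 0 * r ^ 3 + 3 * g 3 1 * r ^ 2 + 2 * g 2 2 * r + g 1 3 :=
      ⟨_, rfl⟩
    have E0 := (E 0).2
    have E1 := (E 1).2
    rw [← hT] at E0 E1 ⊢
    have hT0 : T = 0 := by
      apply mul_left_cancel₀ hm01
      linear_combination E0 - E1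
    rw [hT0] at E0
    have hc0 : g 3 0 * r ^ 2 + g 2 1 * r + g 1 2 = 0 := by
      apply mul_left_cancel₀ hr
      linear_combination E0
    by_cases h0 : m 0 = 0
    · refine ⟨m 1, ?_, (E 0).1, hT0, hc0, m 0, ?_, ?_⟩
      · rw [h0] at hm01; simpa using hm01
      · exact sub_ne_zero.1 hm01
      · rintro x (rfl | rfl) y
        · exact line_r ha hb (hm' 1) y
        · exact line_r ha hb (hm' 0) y
    · refine ⟨m 0, h0, (E 0).1, hT0, hc0, m 1, (sub_ne_zero.1 hm01).symm, ?_⟩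
      rintro x (rfl | rfl) y
      · exact line_r ha hb (hm' 0) y
      · exact line_r ha hb (hm' 1) y
  choose n hn0 E1 E2 E3 n' hnn hL using key1
  obtain ⟨g30, g21, g12⟩ := quad3 ρ hρ E3
  obtain ⟨g31, g22, g13⟩ := quad3 (a := g 3 1) (b := 2 * g 2 2) (c := 4 * A + 3 * g 1 3) ρ hρ
    (fun i => by linear_combination 4 * E1 i - E2 i)
  have g22 : g 2 2 = 0 := by simpa using g22
  obtain ⟨D, hD⟩ : ∃ D, g 4 0 = D := ⟨_, rfl⟩
  simp only [g31, g22, hD] at E1 E2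
  have hA3 : A = 3 * D := by
    have := E1 0
    rw [hρ1] at this
    linear_combination g13 - 3 * this
  have g13 : g 1 3 = -4 * D := by linear_combination (1/3) * g13 - (4/3) * hA3
  have hD0 : D ≠ 0 := by
    intro hD0
    apply hne
    simp [top, f40, f31, f22, f13, hA, hA3, g31, g22, g13, g04, hD, hD0]
  have hcube : ∀ i, ρ i ^ 3 = 1 := by
    intro i
    apply mul_left_cancel₀ hD0
    linear_combination E1 i - hA3 - g13
  have hG : ∀ x y, h4 g x y = D * x ^ 4 - 4 * D * x * y ^ 3 + g 2 0 * x ^ 2 + g 1 1 * x * y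
      + g 1 0 * x := by
    intro x y
    simp only [h4, g04, g03, g02, g01, g00, g31, g22, g13, g30, g21, g12, hD]
    ring
  have key2 : ∀ i, 3 * D * p + 6 * D * ρ i * n i ^ 2 + g 2 0 * ρ i + g 1 1 = 0 ∧
      4 * D * ρ i * n i ^ 2 + 2 * g 2 0 * ρ i + g 1 1 = 0 ∧ 3 * D * q + g 1 0 = 0 ∧
      g 1 0 = 0 ∧ 3 * D * ρ i * s + D * n i ^ 4 + g 2 0 * n i ^ 2 = 0 := by
    intro i
    have hL := hL i
    have hr := hρ0 i
    have h0 := hn0 i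
    have hnn := hnn i
    have hc3 := hcube i
    generalize ρ i = r at *
    generalize n i = m at *
    generalize n' i = m' at *
    have E : ∀ x, x = m ∨ x = m' →
        3 * D * p + 6 * D * r * x ^ 2 + g 2 0 * r + g 1 1 = 0 ∧
        3 * D * r * q + 4 * D * r * x ^ 3 + 2 * g 2 0 * r * x + g 1 1 * x + g 1 0 * r = 0 ∧
        3 * D * r * s + D * x ^ 4 + g 2 0 * x ^ 2 + g 1 0 * x = 0 := by
      intro x hx
      have hLx := hL x hx
      simp only [hF, hG, hA3] at hLx
      obtain ⟨k4, k3, k2, k1, k0⟩ := quart0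
        (r * 3 * D + D * r ^ 4 - 4 * D * r)
        (D * 4 * r ^ 3 * x - 4 * D * x)
        (r * (3 * D * p + 6 * D * r * x ^ 2 + g 2 0 * r + g 1 1))
        (3 * D * r * q + 4 * D * r * x ^ 3 + 2 * g 2 0 * r * x + g 1 1 * x + g 1 0 * r)
        (3 * D * r * s + D * x ^ 4 + g 2 0 * x ^ 2 + g 1 0 * x)
        (fun y => by linear_combination hLx y)
      exact ⟨(mul_eq_zero.1 k2).resolve_left hr, k1, k0⟩
    obtain ⟨u1, u2, u3⟩ := E m (Or.inl rfl)
    obtain ⟨v1, v2, v3⟩ := E m' (Or.inr rfl)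
    have hmm : m' = -m := by
      have : D * r * ((m' - m) * (m' + m)) = 0 := by linear_combination (1/6) * (v1 - u1)
      have h1 : m' - m ≠ 0 := sub_ne_zero.2 hnn
      have : m' + m = 0 := by simpa [hD0, hr, h1] using this
      linear_combination this
    subst hmm
    refine ⟨u1, ?_, ?_, ?_, ?_⟩
    · apply mul_left_cancel₀ h0
      linear_combination (1/2) * (u2 - v2)
    · apply mul_left_cancel₀ hr
      linear_combination (1/2) * (u2 + v2)
    · apply mul_left_cancel₀ h0
      linear_combination (1/2) * (u3 - v3)
    · linear_combination (1/2) * (u3 + v3)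
  have g20 : g 2 0 = 0 := by
    have h01 : ρ 0 - ρ 1 ≠ 0 := by
      intro h0
      have := hρ (sub_eq_zero.1 h0)
      simp at this
    apply mul_left_cancel₀ h01
    linear_combination (-1/2) * (key2 0).1 + (3/4) * (key2 0).2.1 + (1/2) * (key2 1).1
      - (3/4) * (key2 1).2.1
  obtain ⟨w1, w2, w3, w4, w5⟩ := key2 0
  have ht0 := hn0 0
  rw [hρ1, g20] at w1 w2 w5
  generalize n 0 = t at *
  have g11 : g 1 1 = -(4 * D * t ^ 2) := by linear_combination w2
  have hp : p = -(2/3) * t ^ 2 := by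
    apply mul_left_cancel₀ hD0
    linear_combination (1/3) * w1 - (1/3) * w2
  have hq : q = 0 := by
    apply mul_left_cancel₀ hD0
    linear_combination (1/3) * w3 - (1/3) * w4
  have hs' : s = -(1/3) * t ^ 4 := by
    apply mul_left_cancel₀ hD0
    linear_combination (1/3) * w5
  have eA : H4 f = C D * (3 * X 1 ^ 4 - 2 * C t ^ 2 * X 1 ^ 2 * X 2 ^ 2 - C t ^ 4 * X 2 ^ 4) := by
    have i1 : (C (f 0 2) : P3) = -(2 * C D * C t ^ 2) := by
      rw [f02, hA3, hp, show 3 * D * (-(2/3) * t ^ 2) = -(2 * D * t ^ 2) by ring]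
      simp only [map_neg, map_mul, map_pow, C_two]
    have i2 : (C (f 0 0) : P3) = -(C D * C t ^ 4) := by
      rw [f00, hA3, hs', show 3 * D * (-(1/3) * t ^ 4) = -(D * t ^ 4) by ring]
      simp only [map_neg, map_mul, map_pow, C_two]
    simp only [H4, i1, i2]
    simp [f40, f31, f30, f22, f21, f20, f13, f12, f11, f10, f03, f01, hA, hA3, hq, C_two, C_three, C_four]
    ring
  have eB : H4 g = C D * X 0 * (X 0 ^ 3 - 4 * X 1 ^ 3 - 4 * C t ^ 2 * X 1 * X 2 ^ 2) := by
    simp [H4, g04, g03, g02, g01, g00, g31, g22, g13, g30, g21, g12, g20, hD, g11, w4, C_two, C_three, C_four]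
    ring
  refine ⟨!![0, 0, 2 * t; t, t, 0; 1, -1, 0], ?_, -32 * D * t ^ 5, ?_, ?_, ?_, ?_⟩
  · simp [Matrix.det_fin_three, ht0]
    intro h0
    apply ht0
    have : t ^ 2 = 0 := by linear_combination (-1/4) * h0
    simpa using this
  · simp [hD0, ht0]
  all_goals
    rw [hc, ha, hb, eA, eB]
    simp only [pull0, pull1, pull2, compM_add, compM_sub, compM_mul, compM_neg, compM_pow, compM_C,
      compM_X0, compM_X1, compM_X2, compM_two, compM_three, compM_four, map_mul, map_pow, map_neg,
      map_zero, map_one, C_two, C_three, C_four, C_thirtytwo, aF, bF, cF]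
    ring

lemma lineG {g : ℕ → ℕ → ℂ} {p' q' b0 b1 t : ℂ}
    (hG : ∀ x y, h4 g x y = (x ^ 3 + p' * x + q') * (b0 * x + b1 * y + t))
    {f : ℕ → ℕ → ℂ} {r e k4 k3 k2 k1 k0 : ℂ}
    (hF : ∀ y, h4 f (r * y + e) y = k4 * y ^ 4 + k3 * y ^ 3 + k2 * y ^ 2 + k1 * y + k0)
    (hL : ∀ y, r * h4 f (r * y + e) y + h4 g (r * y + e) y = 0) :
    r * k4 + r ^ 3 * (b0 * r + b1) = 0 ∧
    r * k3 + 3 * r ^ 2 * e * (b0 * r + b1) + r ^ 3 * (b0 * e + t) = 0 ∧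
    r * k2 + (3 * r * e ^ 2 + p' * r) * (b0 * r + b1) + 3 * r ^ 2 * e * (b0 * e + t) = 0 ∧
    r * k1 + (e ^ 3 + p' * e + q') * (b0 * r + b1) + (3 * r * e ^ 2 + p' * r) * (b0 * e + t) = 0 ∧
    r * k0 + (e ^ 3 + p' * e + q') * (b0 * e + t) = 0 := by
  apply quart0
  intro y
  have := hL y
  rw [hF, hG] at this
  linear_combination this

lemma lineF4 {f : ℕ → ℕ → ℂ} {A p q s : ℂ}
    (hF : ∀ x y, h4 f x y = A * (y ^ 4 + p * y ^ 2 + q * y + s)) (r e y : ℂ) :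
    h4 f (r * y + e) y = A * y ^ 4 + 0 * y ^ 3 + A * p * y ^ 2 + A * q * y + A * s := by
  rw [hF]; ring

lemma lineF3 {f : ℕ → ℕ → ℂ} {p q a1 a0 s : ℂ}
    (hF : ∀ x y, h4 f x y = (y ^ 3 + p * y + q) * (a1 * x + a0 * y + s)) (r e y : ℂ) :
    h4 f (r * y + e) y = (a1 * r + a0) * y ^ 4 + (a1 * e + s) * y ^ 3 + p * (a1 * r + a0) * y ^ 2
      + (q * (a1 * r + a0) + p * (a1 * e + s)) * y + q * (a1 * e + s) := by
  rw [hF]; ring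

lemma caseC (a b c : P3) (h : IsFoliation 4 a b c) (hz : InvLine a b c ![0, 0, 1])
    (hV : ∃ e : Fin 4 → ℂ, Function.Injective e ∧ ∑ i, e i = 0 ∧ ∀ i, InvLine a b c ![0, 1, -e i])
    (hH : ∃ e : Fin 3 → ℂ, Function.Injective e ∧ ∑ i, e i = 0 ∧ ∀ i, InvLine a b c ![1, 0, -e i])
    {r : ℂ} (hr : r ≠ 0) (hr1 : r ≠ 1) (B : Blk a b c 1 2)
    (B' : Blk a b c r 1) : False := by
  obtain ⟨f, g, ha, hb, hc, htop, -, -, -⟩ := extract a b c h hz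
  have hne := top_ne htop
  obtain ⟨e, he, hs, hl⟩ := hV
  obtain ⟨e', he', hs', hl'⟩ := hH
  obtain ⟨p, q, s, hroot, f40, f31, f30, f22, f21, f20, f13, f12, f11, f10, f03, f02, f01, f00⟩ :=
    V4 e he hs (fun i x => line_y ha hb (hl i) x)
  obtain ⟨p', q', hroot', g04, g13, g03, g22, g12, g02, g21, g11, g01, g20, g10, g00⟩ :=
    V3 e' he' hs' (fun i x => line_x ha hb (hl' i) x)
  simp only [sw] at g04 g13 g03 g22 g12 g02 g21 g11 g01 g20 g10 g00
  obtain ⟨d, hA⟩ : ∃ A, f 0 4 = A := ⟨_, rfl⟩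
  obtain ⟨b0, hb0⟩ : ∃ D, g 4 0 = D := ⟨_, rfl⟩
  obtain ⟨b1, hb1⟩ : ∃ D, g 3 1 = D := ⟨_, rfl⟩
  obtain ⟨t, ht⟩ : ∃ D, g 3 0 = D := ⟨_, rfl⟩
  have hF : ∀ x y, h4 f x y = d * (y ^ 4 + p * y ^ 2 + q * y + s) := by
    intro x y
    simp only [h4, f40, f31, f30, f22, f21, f20, f13, f12, f11, f10, f03, f02, f01, f00, hA]; ring
  have hG : ∀ x y, h4 g x y = (x ^ 3 + p' * x + q') * (b0 * x + b1 * y + t) := by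
    intro x y
    simp only [h4, g04, g13, g03, g22, g12, g02, g21, g11, g01, g20, g10, g00, hb0, hb1, ht]; ring
  obtain ⟨m, hm, hm'⟩ := B
  obtain ⟨m', -, hm''⟩ := B'
  have hm'' := hm'' 0
  generalize m' 0 = n at hm''
  have hm01 : m 0 - m 1 ≠ 0 := by
    intro h0
    have := hm (sub_eq_zero.1 h0)
    simp at this
  have L0 := lineG hG (lineF4 hF _ _) (line_r ha hb (hm' 0))
  have L1 := lineG hG (lineF4 hF _ _) (line_r ha hb (hm' 1))
  obtain ⟨z4, z3, z2, z1, z0⟩ := lineG hG (lineF4 hF _ _) (line_r ha hb hm'')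
  generalize m 0 = x at *
  generalize m 1 = y at *
  obtain ⟨x4, x3, x2, x1, x0⟩ := L0
  obtain ⟨y4, y3, y2, y1, y0⟩ := L1
  have k1 : 4 * b0 + 3 * b1 = 0 := by
    apply mul_left_cancel₀ hm01
    linear_combination x3 - y3
  have ht0 : t = 0 := by linear_combination x3 - x * k1
  have e0 : b0 = 3 * d := by linear_combination k1 - 3 * x4
  have e1 : b1 = -4 * d := by linear_combination 4 * x4 - k1
  have hd0 : d ≠ 0 := by
    intro hd0
    apply hne
    simp [top, f40, f31, f22, f13, hA, hd0, g22, g13, g04, hb0, hb1, e0, e1]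
  subst e0 e1
  rw [ht0] at *
  have xy : y = -x := by
    have : d * (x - y) * (x + y) = 0 := by linear_combination (1/6) * (x2 - y2)
    have : x + y = 0 := by simpa [hd0, hm01] using this
    linear_combination this
  subst xy
  have hx : x ≠ 0 := by
    intro h0
    simp [h0] at hm01
  have hp' : p' = -4 * x ^ 2 := by
    apply mul_left_cancel₀ (mul_ne_zero hd0 hx)
    linear_combination (1/4) * (x1 - y1)
  have hp : p = -10 * x ^ 2 := by
    apply mul_left_cancel₀ hd0
    linear_combination x2 + d * hp'
  have k5 : 3 * r ^ 2 - r - 1 = 0 := by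
    apply mul_left_cancel₀ (mul_ne_zero (mul_ne_zero hd0 hr) (sub_ne_zero.2 hr1))
    linear_combination z4
  have hn : n = 0 := by
    apply mul_left_cancel₀ (mul_ne_zero (mul_ne_zero hd0 (pow_ne_zero 2 hr)) (sub_ne_zero.2 hr1))
    linear_combination (1/12) * z3
  subst hn
  have k6 : 6 - 12 * r = 0 := by
    apply mul_left_cancel₀ (mul_ne_zero (mul_ne_zero hd0 hr) (pow_ne_zero 2 hx))
    rw [hp, hp'] at z2
    linear_combination z2
  have : r = 1/2 := by linear_combination (-1/12) * k6
  rw [this] at k5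
  norm_num at k5

lemma caseE (a b c : P3) (h : IsFoliation 4 a b c) (hz : InvLine a b c ![0, 0, 1])
    (hV : ∃ e : Fin 3 → ℂ, Function.Injective e ∧ ∑ i, e i = 0 ∧ ∀ i, InvLine a b c ![0, 1, -e i])
    (hH : ∃ e : Fin 3 → ℂ, Function.Injective e ∧ ∑ i, e i = 0 ∧ ∀ i, InvLine a b c ![1, 0, -e i])
    {r : ℂ} (hr : r ≠ 0) (hr1 : r ≠ 1) (B : Blk a b c 1 2)
    (B' : Blk a b c r 2) : False := by
  obtain ⟨f, g, ha, hb, hc, htop, -, -, -⟩ := extract a b c h hz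
  have hne := top_ne htop
  obtain ⟨e, he, hs, hl⟩ := hV
  obtain ⟨e', he', hs', hl'⟩ := hH
  obtain ⟨p, q, hroot, f40, f31, f30, f22, f21, f20, f12, f11, f10, f02, f01, f00⟩ :=
    V3 e he hs (fun i x => line_y ha hb (hl i) x)
  obtain ⟨p', q', hroot', g04, g13, g03, g22, g12, g02, g21, g11, g01, g20, g10, g00⟩ :=
    V3 e' he' hs' (fun i x => line_x ha hb (hl' i) x)
  simp only [sw] at g04 g13 g03 g22 g12 g02 g21 g11 g01 g20 g10 g00
  obtain ⟨a1, ha1⟩ : ∃ D, f 1 3 = D := ⟨_, rfl⟩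
  obtain ⟨a0, ha0⟩ : ∃ D, f 0 4 = D := ⟨_, rfl⟩
  obtain ⟨s, hss⟩ : ∃ D, f 0 3 = D := ⟨_, rfl⟩
  obtain ⟨b0, hb0⟩ : ∃ D, g 4 0 = D := ⟨_, rfl⟩
  obtain ⟨b1, hb1⟩ : ∃ D, g 3 1 = D := ⟨_, rfl⟩
  obtain ⟨t, ht⟩ : ∃ D, g 3 0 = D := ⟨_, rfl⟩
  have hF : ∀ x y, h4 f x y = (y ^ 3 + p * y + q) * (a1 * x + a0 * y + s) := by
    intro x y
    simp only [h4, f40, f31, f30, f22, f21, f20, f12, f11, f10, f02, f01, f00, ha1, ha0, hss]; ring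
  have hG : ∀ x y, h4 g x y = (x ^ 3 + p' * x + q') * (b0 * x + b1 * y + t) := by
    intro x y
    simp only [h4, g04, g13, g03, g22, g12, g02, g21, g11, g01, g20, g10, g00, hb0, hb1, ht]; ring
  obtain ⟨m, hm, hm'⟩ := B
  obtain ⟨n, hn, hn'⟩ := B'
  have hm01 : m 0 - m 1 ≠ 0 := by
    intro h0
    have := hm (sub_eq_zero.1 h0)
    simp at this
  have hn01 : n 0 - n 1 ≠ 0 := by
    intro h0
    have := hn (sub_eq_zero.1 h0)
    simp at this
  have L0 := lineG hG (lineF3 hF _ _) (line_r ha hb (hm' 0))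
  have L1 := lineG hG (lineF3 hF _ _) (line_r ha hb (hm' 1))
  have N0 := lineG hG (lineF3 hF _ _) (line_r ha hb (hn' 0))
  have N1 := lineG hG (lineF3 hF _ _) (line_r ha hb (hn' 1))
  generalize m 0 = x at *
  generalize m 1 = y at *
  obtain ⟨x4, x3, x2, x1, x0⟩ := L0
  obtain ⟨y4, y3, y2, y1, y0⟩ := L1
  obtain ⟨z4, z3, -, -, -⟩ := N0
  obtain ⟨-, w3, -, -, -⟩ := N1
  have hd := sub_ne_zero.2 hr1
  have k1 : a1 + 4 * b0 + 3 * b1 = 0 := by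
    apply mul_left_cancel₀ hm01
    linear_combination x3 - y3
  have k2 : a1 + 4 * b0 * r ^ 2 + 3 * b1 * r = 0 := by
    apply mul_left_cancel₀ (mul_ne_zero hn01 hr)
    linear_combination z3 - w3
  have k3 : s + t = 0 := by linear_combination x3 - x * k1
  have k4 : s + r ^ 2 * t = 0 := by
    apply mul_left_cancel₀ hr
    linear_combination z3 - n 0 * r * k2
  have k5 : a1 * r + a0 + r ^ 2 * (b0 * r + b1) = 0 := by
    apply mul_left_cancel₀ hr
    linear_combination z4
  obtain ⟨d, hd3⟩ : ∃ d, d = b0 / 3 := ⟨_, rfl⟩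
  have e0 : b0 = 3 * d := by rw [hd3]; ring
  subst e0
  have e1 : b1 = -4 * d * (1 + r) := by
    apply mul_left_cancel₀ hd
    linear_combination (1/3) * (k2 - k1)
  subst e1
  have e2 : a1 = 12 * d * r := by linear_combination k1
  subst e2
  have e3 : a0 = (1 - 8 * r) * d := by linear_combination x4
  subst e3
  have hd0 : d ≠ 0 := by
    intro hd0
    apply hne
    simp [top, f40, f31, f22, ha1, ha0, hd0, g22, g13, g04, hb0, hb1]
  have k6 : r ^ 2 - 7 * r + 1 = 0 := by
    apply mul_left_cancel₀ (mul_ne_zero hd0 hd)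
    linear_combination -k5
  have ht0 : t = 0 := by
    have : (r - 1) * (r + 1) * t = 0 := by linear_combination k4 - k3
    have h1 : r + 1 ≠ 0 := by
      intro h1
      have : r = -1 := by linear_combination h1
      rw [this] at k6
      norm_num at k6
    simpa [hd, h1] using this
  have hs0 : s = 0 := by linear_combination k3 - ht0
  simp only [ht0, hs0] at x3 x2 x1 x0 y3 y2 y1 y0
  have hxy : y = -x := by
    have : d * (1 - 2 * r) * (x - y) * (x + y) = 0 := by linear_combination (1/6) * (x2 - y2)
    have h1 : 1 - 2 * r ≠ 0 := by
      intro h1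
      have : r = 1/2 := by linear_combination (-1/2) * h1
      rw [this] at k6
      norm_num at k6
    have : x + y = 0 := by simpa [hd0, hm01, h1] using this
    linear_combination this
  subst hxy
  have hx : x ≠ 0 := by
    intro h0
    simp [h0] at hm01
  have i1 : p * (4 * r + 1) + p' * (-1 - 4 * r) + x ^ 2 * (6 - 12 * r) = 0 := by
    apply mul_left_cancel₀ hd0
    linear_combination x2
  have i2 : 12 * r * p + (8 - 4 * r) * x ^ 2 + (2 - 4 * r) * p' = 0 := by
    apply mul_left_cancel₀ (mul_ne_zero hd0 hx)
    linear_combination (1/2) * (x1 - y1)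
  have i3 : x ^ 2 = -p' := by
    apply mul_left_cancel₀ (mul_ne_zero hd0 (pow_ne_zero 2 hx))
    linear_combination (1/6) * (x0 + y0)
  rw [i3] at i1 i2
  have i4 : p' = 2 * r * p := by linear_combination (-1/6) * i2
  have hp : p = 0 := by
    have : p * (102 * r - 15) = 0 := by
      rw [i4] at i1
      linear_combination i1 - 16 * p * k6
    have h1 : 102 * r - 15 ≠ 0 := by
      intro h1
      have : r = 15 / 102 := by linear_combination (1/102) * h1
      rw [this] at k6
      norm_num at k6
    simpa [h1] using this
  apply hx
  have : x ^ 2 = 0 := by rw [i3, i4, hp]; ring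
  simpa using this

lemma caseD (a b c : P3) (h : IsFoliation 4 a b c) (hz : InvLine a b c ![0, 0, 1])
    (hV : ∃ e : Fin 3 → ℂ, Function.Injective e ∧ ∑ i, e i = 0 ∧ ∀ i, InvLine a b c ![0, 1, -e i])
    (hH : ∃ e : Fin 3 → ℂ, Function.Injective e ∧ ∑ i, e i = 0 ∧ ∀ i, InvLine a b c ![1, 0, -e i])
    {r : ℂ} (hr : r ≠ 0) (hr1 : r ≠ 1) (B : Blk a b c 1 3)
    (B' : Blk a b c r 1) : LinConj3 a b c aH bH cH := by
  obtain ⟨f, g, ha, hb, hc, htop, -, -, -⟩ := extract a b c h hz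
  have hne := top_ne htop
  obtain ⟨e, he, hs, hl⟩ := hV
  obtain ⟨e', he', hs', hl'⟩ := hH
  obtain ⟨p, q, hroot, f40, f31, f30, f22, f21, f20, f12, f11, f10, f02, f01, f00⟩ :=
    V3 e he hs (fun i x => line_y ha hb (hl i) x)
  obtain ⟨p', q', hroot', g04, g13, g03, g22, g12, g02, g21, g11, g01, g20, g10, g00⟩ :=
    V3 e' he' hs' (fun i x => line_x ha hb (hl' i) x)
  simp only [sw] at g04 g13 g03 g22 g12 g02 g21 g11 g01 g20 g10 g00
  obtain ⟨a1, ha1⟩ : ∃ D, f 1 3 = D := ⟨_, rfl⟩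
  obtain ⟨a0, ha0⟩ : ∃ D, f 0 4 = D := ⟨_, rfl⟩
  obtain ⟨s, hss⟩ : ∃ D, f 0 3 = D := ⟨_, rfl⟩
  obtain ⟨d, hb0⟩ : ∃ D, g 4 0 = D := ⟨_, rfl⟩
  obtain ⟨b1, hb1⟩ : ∃ D, g 3 1 = D := ⟨_, rfl⟩
  obtain ⟨t, ht⟩ : ∃ D, g 3 0 = D := ⟨_, rfl⟩
  have hF : ∀ x y, h4 f x y = (y ^ 3 + p * y + q) * (a1 * x + a0 * y + s) := by
    intro x y
    simp only [h4, f40, f31, f30, f22, f21, f20, f12, f11, f10, f02, f01, f00, ha1, ha0, hss]; ring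
  have hG : ∀ x y, h4 g x y = (x ^ 3 + p' * x + q') * (d * x + b1 * y + t) := by
    intro x y
    simp only [h4, g04, g13, g03, g22, g12, g02, g21, g11, g01, g20, g10, g00, hb0, hb1, ht]; ring
  obtain ⟨m, hm, hm'⟩ := B
  obtain ⟨n, -, hn'⟩ := B'
  have N0 := lineG hG (lineF3 hF _ _) (line_r ha hb (hn' 0))
  have L := fun i => lineG hG (lineF3 hF _ _) (line_r ha hb (hm' i))
  obtain ⟨x4, -⟩ := L 0
  obtain ⟨-, u1, u0⟩ := quad3 (a := 0) (b := a1 + 4 * d + 3 * b1) (c := s + t) m hm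
    (fun i => by linear_combination (L i).2.1)
  obtain ⟨v2, v1, v0⟩ := quad3 (a := 6 * d + 3 * b1) (b := 3 * t)
    (c := p * (a1 + a0) + p' * (d + b1)) m hm
    (fun i => by linear_combination (L i).2.2.1)
  have e1 : b1 = -2 * d := by linear_combination (1/3) * v2
  subst e1
  have e2 : a1 = 2 * d := by linear_combination u1
  subst e2
  have e3 : a0 = -d := by linear_combination x4
  subst e3
  have e4 : t = 0 := by linear_combination (1/3) * v1
  subst e4
  have e5 : s = 0 := by linear_combination u0
  subst e5
  have hd0 : d ≠ 0 := by
    intro hd0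
    apply hne
    simp [top, f40, f31, f22, ha1, ha0, hd0, g22, g13, g04, hb0, hb1]
  have e6 : p' = p := by
    apply mul_left_cancel₀ hd0
    linear_combination -v0
  subst e6
  obtain ⟨z4, z3, z2, -, -⟩ := N0
  generalize n 0 = n at *
  have hr1' := sub_ne_zero.2 hr1
  have k1 : r ^ 2 - r + 1 = 0 := by
    apply mul_left_cancel₀ (mul_ne_zero (mul_ne_zero hd0 hr) hr1')
    linear_combination z4
  have h12 : 2 * r - 1 ≠ 0 := by
    intro h1
    have : r = 1 / 2 := by linear_combination (1/2) * h1
    rw [this] at k1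
    norm_num at k1
  have hn0 : n = 0 := by
    apply mul_left_cancel₀ (mul_ne_zero (mul_ne_zero (mul_ne_zero hd0 hr) hr1') h12)
    linear_combination (1/2) * z3
  subst hn0
  have hp : p' = 0 := by
    apply mul_left_cancel₀ (mul_ne_zero (mul_ne_zero hd0 hr) hr1')
    linear_combination (1/3) * z2
  subst hp
  obtain ⟨i, hi⟩ : ∃ i, m i ≠ 0 := by
    by_contra! h0
    have := hm ((h0 0).trans (h0 1).symm)
    simp at this
  obtain ⟨-, -, -, y1, y0⟩ := L i
  generalize m i = x at *
  have j1 : 2 * x ^ 3 + q - q' = 0 := by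
    apply mul_left_cancel₀ hd0
    linear_combination y1
  have j0 : x ^ 3 + 2 * q + q' = 0 := by
    apply mul_left_cancel₀ (mul_ne_zero hd0 hi)
    linear_combination y0
  have e7 : q' = -q := by linear_combination (2/3) * j0 - (1/3) * j1
  subst e7
  have hq : q ≠ 0 := by
    intro hq
    have z : ∀ i, e i = 0 := by
      intro i
      have := hroot i
      simpa [hq] using this
    have := he ((z 0).trans (z 1).symm)
    simp at this
  obtain ⟨μ, hμ⟩ := IsAlgClosed.exists_pow_nat_eq (-q) (n := 3) (by norm_num)
  have hμ0 : μ ≠ 0 := by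
    rintro rfl
    apply hq
    linear_combination hμ
  have hqμ : q = -μ ^ 3 := by rw [hμ, neg_neg]
  have eA : H4 f = C d * (X 1 ^ 3 - C μ ^ 3 * X 2 ^ 3) * (2 * X 0 - X 1) := by
    simp only [H4, f40, f31, f30, f22, f21, f20, f12, f11, f10, f02, f01, f00, ha1, ha0, hss, hqμ,
      map_neg, map_mul, map_pow, map_zero, map_add, C_two]
    ring
  have eB : H4 g = C d * (X 0 ^ 3 + C μ ^ 3 * X 2 ^ 3) * (X 0 - 2 * X 1) := by
    simp only [H4, g04, g13, g03, g22, g12, g02, g21, g11, g01, g20, g10, g00, hb0, hb1, ht, hqμ,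
      map_neg, map_mul, map_pow, map_zero, map_add, C_two]
    ring
  have R : (C r : P3) ^ 2 - C r + 1 = 0 := by
    rw [← map_pow, ← map_sub, ← map_one C, ← map_add, k1, map_zero]
  refine ⟨!![-μ, -μ, 0; μ * (r - 1), -(μ * r), 0; 0, 0, 1 - r], ?_, 3 * d * μ ^ 5 * (r - 1),
    ?_, ?_, ?_, ?_⟩
  · have : (!![-μ, -μ, 0; μ * (r - 1), -(μ * r), 0; 0, 0, 1 - r] : Matrix (Fin 3) (Fin 3) ℂ).det
        = -(μ ^ 2 * (2 * r - 1) * (r - 1)) := by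
      simp [Matrix.det_fin_three]; ring
    rw [this]
    simp [hμ0, h12, hr1']
  · simp [hd0, hr1', hμ0]
  all_goals
    rw [hc, ha, hb, eA, eB]
    simp only [pull0, pull1, pull2, compM_add, compM_sub, compM_mul, compM_neg, compM_pow, compM_C,
      compM_X0, compM_X1, compM_X2, compM_two, map_mul, map_pow, map_neg, map_sub,
      map_zero, map_one, C_two, C_three, aH, bH, cH]
    generalize (C r : P3) = r at *
    generalize (C d : P3) = d at *
    generalize (C μ : P3) = μ at *
    generalize (X 0 : P3) = x at *
    generalize (X 1 : P3) = y at *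
    generalize (X 2 : P3) = z at *
    grind

lemma phi_ne {κ ρ ρ₁ ρ₂ : ℂ} (hκ : κ ≠ 0) (h1 : ρ ≠ ρ₁) (h2 : ρ ≠ ρ₂) :
    κ * (ρ - ρ₂) / (ρ - ρ₁) ≠ 0 :=
  div_ne_zero (mul_ne_zero hκ (sub_ne_zero.2 h2)) (sub_ne_zero.2 h1)

lemma phi_inj {κ ρ σ ρ₁ ρ₂ : ℂ} (hκ : κ ≠ 0) (h12 : ρ₁ ≠ ρ₂) (h1 : ρ ≠ ρ₁) (h2 : σ ≠ ρ₁)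
    (h : ρ ≠ σ) : κ * (ρ - ρ₂) / (ρ - ρ₁) ≠ κ * (σ - ρ₂) / (σ - ρ₁) := by
  rw [Ne, div_eq_div_iff (sub_ne_zero.2 h1) (sub_ne_zero.2 h2)]
  intro h0
  have : κ * (ρ₁ - ρ₂) * (ρ - σ) = 0 := by linear_combination -h0
  simp [hκ, sub_ne_zero.2 h12, sub_ne_zero.2 h] at this

lemma phi_one {ρ ρ₁ ρ₂ : ℂ} (h1 : ρ ≠ ρ₁) (h2 : ρ ≠ ρ₂) :
    (ρ - ρ₁) / (ρ - ρ₂) * (ρ - ρ₂) / (ρ - ρ₁) = 1 := by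
  have := sub_ne_zero.2 h1
  have := sub_ne_zero.2 h2
  field_simp

/-- **Theorem B.** Up to automorphism of `ℙ²(ℂ)`, the Fermat foliation and the Hesse
pencil are the only reduced convex foliations of degree four: any degree-4 foliation with
12 pairwise non-proportional invariant lines is linearly conjugate to one of them. -/
theorem reduced_convex_degree_four_classification
    (a b c : P3) (hfol : IsFoliation 4 a b c)
    (hlines : ∃ L : Fin 12 → (Fin 3 → ℂ),
      (∀ i, InvLine a b c (L i)) ∧
      ∀ i j, i ≠ j → ∀ t : ℂ, L i ≠ t • L j) :
    LinConj3 a b c aF bF cF ∨ LinConj3 a b c aH bH cH := by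
  obtain ⟨L, hL, hne⟩ := hlines
  obtain ⟨a2, b2, c2, h, hz, ⟨r, e, hl, hre⟩, htr⟩ := chart1 a b c hfol L hL hne
  obtain ⟨ρ, hρ, k, hB, hk⟩ := types a2 b2 c2 h hz r e hl hre
  suffices LinConj3 a2 b2 c2 aF bF cF ∨ LinConj3 a2 b2 c2 aH bH cH from
    this.imp (htr _ _ _) (htr _ _ _)
  have hn : ∀ i j, i ≠ j → ρ i ≠ ρ j := fun i j hij h0 => hij (hρ h0)
  have B0 := hB 0
  have B1 := hB 1
  have B2 := hB 2
  have B3 := hB 3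
  have B4 := hB 4
  have n43 := hn 4 3 (by decide)
  have n04 := hn 0 4 (by decide)
  have n14 := hn 1 4 (by decide)
  have n24 := hn 2 4 (by decide)
  have n34 := hn 3 4 (by decide)
  have n03 := hn 0 3 (by decide)
  have n13 := hn 1 3 (by decide)
  have n23 := hn 2 3 (by decide)
  have n01 := hn 0 1 (by decide)
  have n02 := hn 0 2 (by decide)
  have n12 := hn 1 2 (by decide)
  have κ23 : (ρ 2 - ρ 4) / (ρ 2 - ρ 3) ≠ 0 := div_ne_zero (sub_ne_zero.2 n24) (sub_ne_zero.2 n23)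
  have κ10 : (ρ 1 - ρ 4) / (ρ 1 - ρ 0) ≠ 0 :=
    div_ne_zero (sub_ne_zero.2 n14) (sub_ne_zero.2 n01.symm)
  rcases hk with ⟨k0, k1, k2, k3, k4⟩ | ⟨k0, k1, k2, k3, k4⟩ | ⟨k0, k1, k2, k3, k4⟩ |
    ⟨k0, k1, k2, k3, k4⟩ | ⟨k0, k1, k2, k3, k4⟩ <;>
    rw [k0] at B0 <;> rw [k1] at B1 <;> rw [k2] at B2 <;> rw [k3] at B3 <;> rw [k4] at B4
  · obtain ⟨a3, b3, c3, h3, hz3, hV, hH, hT, htr3⟩ :=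
      chart2 a2 b2 c2 h hz n43 (by norm_num) (by norm_num) B4 B3 one_ne_zero
    exact Or.inl (htr3 _ _ _ (caseA a3 b3 c3 h3 hz3 hV hH (phi_ne one_ne_zero n04 n03)
      (phi_ne one_ne_zero n14 n13) (phi_inj one_ne_zero n43 n04 n14 n01) (hT _ _ n04 B0)
      (hT _ _ n14 B1)))
  · obtain ⟨a3, b3, c3, h3, hz3, hV, hH, hT, htr3⟩ :=
      chart2 a2 b2 c2 h hz n43 (by norm_num) (by norm_num) B4 B3 κ23
    have T2 := hT _ _ n24 B2
    have i := phi_inj κ23 n43 n04 n24 n02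
    rw [phi_one n24 n23] at T2 i
    exact (caseC a3 b3 c3 h3 hz3 hV hH (phi_ne κ23 n04 n03) i T2 (hT _ _ n04 B0)).elim
  · obtain ⟨a3, b3, c3, h3, hz3, hV, hH, hT, htr3⟩ :=
      chart2 a2 b2 c2 h hz n04.symm (by norm_num) (by norm_num) B4 B0 κ10
    obtain ⟨φ, hφ⟩ : ∃ φ : Fin 3 → ℂ, φ = fun i =>
      (ρ 1 - ρ 4) / (ρ 1 - ρ 0) * (![ρ 1, ρ 2, ρ 3] i - ρ 0) / (![ρ 1, ρ 2, ρ 3] i - ρ 4) := ⟨_, rfl⟩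
    have p1 := phi_one n14 n01.symm
    have i12 := phi_inj κ10 n04.symm n14 n24 n12
    have i13 := phi_inj κ10 n04.symm n14 n34 n13
    have i23 := phi_inj κ10 n04.symm n24 n34 n23
    refine Or.inl (htr3 _ _ _ (caseB a3 b3 c3 h3 hz3 hV hH φ ?_ ?_ ?_ ?_))
    · intro i j hij
      by_contra hc
      fin_cases i <;> fin_cases j <;> simp [hφ] at hij hc
      · exact i12 hij
      · exact i13 hij
      · exact i12 hij.symm
      · exact i23 hij
      · exact i13 hij.symm
      · exact i23 hij.symm
    · intro i
      rw [hφ]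
      fin_cases i
      · exact phi_ne κ10 n14 n01.symm
      · exact phi_ne κ10 n24 n02.symm
      · exact phi_ne κ10 n34 n03.symm
    · rw [hφ]
      exact p1
    · intro i
      rw [hφ]
      fin_cases i
      · exact hT _ _ n14 B1
      · exact hT _ _ n24 B2
      · exact hT _ _ n34 B3
  · obtain ⟨a3, b3, c3, h3, hz3, hV, hH, hT, htr3⟩ :=
      chart2 a2 b2 c2 h hz n43 (by norm_num) (by norm_num) B4 B3 κ23
    have T2 := hT _ _ n24 B2
    have i := phi_inj κ23 n43 n04 n24 n02
    rw [phi_one n24 n23] at T2 i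
    exact Or.inr (htr3 _ _ _
      (caseD a3 b3 c3 h3 hz3 hV hH (phi_ne κ23 n04 n03) i T2 (hT _ _ n04 B0)))
  · obtain ⟨a3, b3, c3, h3, hz3, hV, hH, hT, htr3⟩ :=
      chart2 a2 b2 c2 h hz n43 (by norm_num) (by norm_num) B4 B3 κ23
    have T2 := hT _ _ n24 B2
    have i := phi_inj κ23 n43 n14 n24 n12
    rw [phi_one n24 n23] at T2 i
    exact (caseE a3 b3 c3 h3 hz3 hV hH (phi_ne κ23 n14 n13) i T2 (hT _ _ n14 B1)).elim
end
end

section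
/- Let A, B ∈ ℂ[x,y] be homogeneous of degree 4 without common factor, and suppose D = (∂A/∂x)(∂B/∂y) − (∂A/∂y)(∂B/∂x) = c·ℓ₁²ℓ₂²ℓ₃² for some c ∈ ℂ∖{0} and pairwise non-proportional linear forms ℓ₁, ℓ₂, ℓ₃ each dividing C = xA + yB (i.e. the homogeneous foliation defined by ω = A dx + B dy is convex of type 3·R₂). Then ω is linearly conjugate to ω₂ = y³(2x−y)dx + x³(x−2y)dy. -/
open MvPolynomial

noncomputable section

/-- Polynomials in two variables `x = X 0`, `y = X 1` over `ℂ`. -/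
abbrev P2 : Type := MvPolynomial (Fin 2) ℂ

/-- The inflection polynomial `D_ω = A_x B_y - A_y B_x` of `ω = A dx + B dy`. -/
def Dpoly (A B : P2) : P2 :=
  pderiv 0 A * pderiv 1 B - pderiv 1 A * pderiv 0 B

/-- The tangent cone `C_ω = xA + yB` of `ω = A dx + B dy`. -/
def Cpoly (A B : P2) : P2 := X 0 * A + X 1 * B

/-- `A` and `B` have no common (non-unit) factor. -/
def NoCommonFactor (A B : P2) : Prop := ∀ p : P2, p ∣ A → p ∣ B → IsUnit p

/-- Convexity: every linear factor of `D_ω` divides `C_ω`. -/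
def IsConvexPair (A B : P2) : Prop :=
  ∀ l : P2, l.IsHomogeneous 1 → l ≠ 0 → l ∣ Dpoly A B → l ∣ Cpoly A B

/-- Composition of a polynomial with the linear map `φ(x,y) = (a₁x + a₂y, a₃x + a₄y)`. -/
def comp2 (a₁ a₂ a₃ a₄ : ℂ) (p : P2) : P2 :=
  aeval ![C a₁ * X 0 + C a₂ * X 1, C a₃ * X 0 + C a₄ * X 1] p

/-- `ω = A dx + B dy` is linearly conjugate to `ω' = A' dx + B' dy`:
`φ*ω = λ ω'` for some `φ ∈ GL₂(ℂ)` and `λ ∈ ℂ \ {0}`. -/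
def LinConj (A B A' B' : P2) : Prop :=
  ∃ a₁ a₂ a₃ a₄ lam : ℂ, a₁ * a₄ - a₂ * a₃ ≠ 0 ∧ lam ≠ 0 ∧
    C a₁ * comp2 a₁ a₂ a₃ a₄ A + C a₃ * comp2 a₁ a₂ a₃ a₄ B = C lam * A' ∧
    C a₂ * comp2 a₁ a₂ a₃ a₄ A + C a₄ * comp2 a₁ a₂ a₃ a₄ B = C lam * B'

/-- ω₁ = y⁴dx − x⁴dy -/
def A1 : P2 := X 1 ^ 4
def B1 : P2 := -X 0 ^ 4
/-- ω₂ = y³(2x−y)dx + x³(x−2y)dy -/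
def A2 : P2 := X 1 ^ 3 * (2 * X 0 - X 1)
def B2 : P2 := X 0 ^ 3 * (X 0 - 2 * X 1)
/-- ω₃ = y²(6x²+4xy+y²)dx − x³(x+4y)dy -/
def A3 : P2 := X 1 ^ 2 * (6 * X 0 ^ 2 + 4 * X 0 * X 1 + X 1 ^ 2)
def B3 : P2 := -(X 0 ^ 3 * (X 0 + 4 * X 1))
/-- ω₄ = y³(4x+y)dx + x³(x+4y)dy -/
def A4 : P2 := X 1 ^ 3 * (4 * X 0 + X 1)
def B4 : P2 := X 0 ^ 3 * (X 0 + 4 * X 1)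
/-- ω₅ = y²(6x²+4xy+y²)dx + 3x⁴dy -/
def A5 : P2 := X 1 ^ 2 * (6 * X 0 ^ 2 + 4 * X 0 * X 1 + X 1 ^ 2)
def B5 : P2 := 3 * X 0 ^ 4


/-- Two polynomials are proportional (one is a constant multiple of the other). -/
def Proportional (l₁ l₂ : P2) : Prop := ∃ t : ℂ, l₁ = C t * l₂ ∨ l₂ = C t * l₁

/-- A polynomial function of degree at most six that vanishes identically has zero coefficients. -/
theorem coeffs_zero (c0 c1 c2 c3 c4 c5 c6 : ℂ)
    (h : ∀ z : ℂ, c0 + c1*z + c2*z^2 + c3*z^3 + c4*z^4 + c5*z^5 + c6*z^6 = 0) :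
    c0 = 0 ∧ c1 = 0 ∧ c2 = 0 ∧ c3 = 0 ∧ c4 = 0 ∧ c5 = 0 ∧ c6 = 0 := by
  refine ⟨?_, ?_, ?_, ?_, ?_, ?_, ?_⟩
  · linear_combination (1) * h (0)
  · linear_combination (3/4) * h (1) + (-3/4) * h (-1) + (-3/20) * h (2) + (3/20) * h (-2) + (1/60) * h (3) + (-1/60) * h (-3)
  · linear_combination (-49/36) * h (0) + (3/4) * h (1) + (3/4) * h (-1) + (-3/40) * h (2) + (-3/40) * h (-2) + (1/180) * h (3) + (1/180) * h (-3)
  · linear_combination (-13/48) * h (1) + (13/48) * h (-1) + (1/6) * h (2) + (-1/6) * h (-2) + (-1/48) * h (3) + (1/48) * h (-3)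
  · linear_combination (7/18) * h (0) + (-13/48) * h (1) + (-13/48) * h (-1) + (1/12) * h (2) + (1/12) * h (-2) + (-1/144) * h (3) + (-1/144) * h (-3)
  · linear_combination (1/48) * h (1) + (-1/48) * h (-1) + (-1/60) * h (2) + (1/60) * h (-2) + (1/240) * h (3) + (-1/240) * h (-3)
  · linear_combination (-1/36) * h (0) + (1/48) * h (1) + (1/48) * h (-1) + (-1/120) * h (2) + (-1/120) * h (-2) + (1/720) * h (3) + (1/720) * h (-3)

theorem hom_repr (n : ℕ) (p : P2) (hp : p.IsHomogeneous n) :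
    ∃ a : ℕ → ℂ, p = ∑ i ∈ Finset.range (n+1), C (a i) * (X 0 ^ i * X 1 ^ (n-i)) := by
  refine ⟨fun i => coeff (Finsupp.single 0 i + Finsupp.single 1 (n-i)) p, ?_⟩
  have key : ∀ i (a : ℂ), (C a * (X 0 ^ i * X 1 ^ (n-i)) : P2)
      = monomial (Finsupp.single 0 i + Finsupp.single 1 (n-i)) a := by
    intro i a
    rw [X_pow_eq_monomial, X_pow_eq_monomial, monomial_mul, C_mul_monomial]
    simp
  simp_rw [key]
  ext m
  rw [coeff_sum]
  simp_rw [coeff_monomial]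
  by_cases hm : m 0 + m 1 = n
  · have hm' : m = Finsupp.single 0 (m 0) + Finsupp.single 1 (n - m 0) := by
      ext j
      fin_cases j
      · simp
      · simp; omega
    rw [Finset.sum_eq_single (m 0)]
    · rw [if_pos hm'.symm, ← hm']
    · intro b _ hb
      rw [if_neg]
      intro h
      apply hb
      have := DFunLike.congr_fun h 0
      simpa using this
    · intro h
      exact absurd (Finset.mem_range.2 (by omega)) h
  · rw [hp.coeff_eq_zero, Finset.sum_eq_zero]
    · intro i hi
      rw [if_neg]
      intro h
      apply hm
      have e0 := DFunLike.congr_fun h 0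
      have e1 := DFunLike.congr_fun h 1
      have := Finset.mem_range.1 hi
      simp at e0 e1
      omega
    · rw [Finsupp.degree_eq_sum, Fin.sum_univ_two]
      exact hm

theorem hom_four (p : P2) (hp : p.IsHomogeneous 4) :
    ∃ a0 a1 a2 a3 a4 : ℂ, p = C a0 * X 1 ^ 4 + C a1 * (X 0 * X 1 ^ 3) + C a2 * (X 0 ^ 2 * X 1 ^ 2)
      + C a3 * (X 0 ^ 3 * X 1) + C a4 * X 0 ^ 4 := by
  obtain ⟨a, ha⟩ := hom_repr 4 p hp
  refine ⟨a 0, a 1, a 2, a 3, a 4, ?_⟩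
  rw [ha]
  simp [Finset.sum_range_succ]

theorem hom_one (p : P2) (hp : p.IsHomogeneous 1) :
    ∃ a b : ℂ, p = C a * X 0 + C b * X 1 := by
  obtain ⟨a, ha⟩ := hom_repr 1 p hp
  refine ⟨a 1, a 0, ?_⟩
  rw [ha]
  simp [Finset.sum_range_succ, add_comm]

/-- Linear forms with vanishing determinant are proportional. -/
theorem det_ne (p q r s : ℂ)
    (h : ¬ Proportional (C p * X 0 + C q * X 1) (C r * X 0 + C s * X 1)) :
    p * s - r * q ≠ 0 := by
  intro hd
  apply h
  by_cases hp : p = 0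
  · by_cases hq : q = 0
    · exact ⟨0, Or.inl (by simp [hp, hq])⟩
    · refine ⟨s / q, Or.inr ?_⟩
      obtain ⟨t, rfl⟩ : ∃ t, s = t * q := ⟨s / q, by field_simp⟩
      have e1 : r = t * p := mul_right_cancel₀ hq (by linear_combination -hd)
      rw [e1, mul_div_cancel_right₀ _ hq]
      simp only [C_mul]; ring
  · refine ⟨r / p, Or.inr ?_⟩
    obtain ⟨t, rfl⟩ : ∃ t, r = t * p := ⟨r / p, by field_simp⟩
    have e1 : s = t * q := mul_left_cancel₀ hp (by linear_combination hd)
    rw [e1, mul_div_cancel_right₀ _ hp]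
    simp only [C_mul]; ring

theorem X_not_unit (i : Fin 2) : ¬ IsUnit (X i : P2) := by
  intro h
  have := h.map (constantCoeff (σ := Fin 2) (R := ℂ))
  simp at this

theorem X_sub_not_unit : ¬ IsUnit (X 0 - X 1 : P2) := by
  intro h
  have := h.map (constantCoeff (σ := Fin 2) (R := ℂ))
  simp at this

/-- The classification in normalized coordinates. -/
theorem core (A B : P2) (hA : A.IsHomogeneous 4) (hB : B.IsHomogeneous 4)
    (hcop : NoCommonFactor A B) (k : ℂ)
    (hx : X 0 ∣ Cpoly A B) (hy : X 1 ∣ Cpoly A B) (hxy : (X 0 - X 1) ∣ Cpoly A B)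
    (hD : Dpoly A B = C k * X 0 ^ 2 * X 1 ^ 2 * (X 0 - X 1) ^ 2) :
    ∃ b : ℂ, b ≠ 0 ∧ A = C b * A2 ∧ B = C b * B2 := by
  obtain ⟨a0, a1, a2, a3, a4, rfl⟩ := hom_four A hA
  obtain ⟨b0, b1, b2, b3, b4, rfl⟩ := hom_four B hB
  have e1 : b0 = 0 := by
    obtain ⟨q, hq⟩ := hx
    have := congrArg (eval ![0, 1]) hq
    simpa [Cpoly] using this
  have e2 : a4 = 0 := by
    obtain ⟨q, hq⟩ := hy
    have := congrArg (eval ![1, 0]) hq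
    simpa [Cpoly] using this
  subst e1 e2
  have e3 : a0 + a1 + a2 + a3 + (b1 + b2 + b3 + b4) = 0 := by
    obtain ⟨q, hq⟩ := hxy
    have := congrArg (eval ![1, 1]) hq
    simpa [Cpoly] using this
  have hz := fun z : ℂ => congrArg (eval ![1, z]) hD
  simp [Dpoly, pderiv_X, Derivation.leibniz, Derivation.leibniz_pow] at hz
  obtain ⟨c0, c1, c2, c3, c4, c5, c6⟩ := coeffs_zero (-4*(a3*b4)) (-8*(a2*b4))
    (2*a2*b3 + 6*a3*b2 - (2*a3*b2 + 6*a2*b3 + 12*a1*b4) - k)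
    (a1*b3 + 4*a2*b2 + 9*a3*b1 - (a3*b1 + 4*a2*b2 + 9*a1*b3 + 16*a0*b4) + 2*k)
    (2*a1*b2 + 6*a2*b1 - (2*a2*b1 + 6*a1*b2 + 12*a0*b3) - k)
    (-8*(a0*b2)) (-4*(a0*b1))
    (fun z => by linear_combination hz z)
  have ha0 : a0 ≠ 0 := by
    rintro rfl
    refine X_not_unit 0 (hcop _ ⟨C a1 * X 1 ^ 3 + C a2 * (X 0 * X 1 ^ 2) + C a3 * (X 0 ^ 2 * X 1), ?_⟩
      ⟨C b1 * X 1 ^ 3 + C b2 * (X 0 * X 1 ^ 2) + C b3 * (X 0 ^ 2 * X 1) + C b4 * X 0 ^ 3, ?_⟩)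
    · simp only [C_0]; ring
    · simp only [C_0]; ring
  have hb4 : b4 ≠ 0 := by
    rintro rfl
    refine X_not_unit 1 (hcop _
      ⟨C a0 * X 1 ^ 3 + C a1 * (X 0 * X 1 ^ 2) + C a2 * (X 0 ^ 2 * X 1) + C a3 * X 0 ^ 3, ?_⟩
      ⟨C b1 * (X 0 * X 1 ^ 2) + C b2 * (X 0 ^ 2 * X 1) + C b3 * X 0 ^ 3, ?_⟩)
    · simp only [C_0]; ring
    · simp only [C_0]; ring
  simp [ha0, hb4] at c0 c1 c5 c6
  subst c0 c1 c5 c6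
  have f1 : (a1 + a0) * (a0 + b4) = 0 := by linear_combination a0 * e3 + (c4 - c2) / 12
  have f2 : (a1 + a0) * (a1 + 2 * a0) = 0 := by
    apply mul_left_cancel₀ hb4
    linear_combination (a1 / 12) * c4 - (a1 / 12 + a0 / 4) * c2 - a0 / 8 * c3
  have hne : a1 + a0 ≠ 0 := by
    intro h
    have h1 : a1 = -a0 := by linear_combination h
    have h2 : b3 = -b4 := by linear_combination e3 - h
    subst h1 h2
    refine X_sub_not_unit (hcop _ ⟨- C a0 * X 1 ^ 3, ?_⟩ ⟨C b4 * X 0 ^ 3, ?_⟩)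
    · simp only [C_0, C_neg]; ring
    · simp only [C_0, C_neg]; ring
  have g1 := (mul_eq_zero.1 f1).resolve_left hne
  have g2 := (mul_eq_zero.1 f2).resolve_left hne
  have h1 : a0 = -b4 := by linear_combination g1
  subst h1
  have h2 : a1 = 2 * b4 := by linear_combination g2
  have h3 : b3 = -2 * b4 := by linear_combination e3 - g2
  subst h2 h3
  refine ⟨b4, hb4, ?_, ?_⟩
  · simp only [A2, C_0, C_neg, C_mul, map_ofNat]; ring
  · simp only [B2, C_0, C_neg, C_mul, map_ofNat]; ring

theorem pderiv_comp2 (a₁ a₂ a₃ a₄ : ℂ) (p : P2) :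
    pderiv 0 (comp2 a₁ a₂ a₃ a₄ p)
      = C a₁ * comp2 a₁ a₂ a₃ a₄ (pderiv 0 p) + C a₃ * comp2 a₁ a₂ a₃ a₄ (pderiv 1 p) ∧
    pderiv 1 (comp2 a₁ a₂ a₃ a₄ p)
      = C a₂ * comp2 a₁ a₂ a₃ a₄ (pderiv 0 p) + C a₄ * comp2 a₁ a₂ a₃ a₄ (pderiv 1 p) := by
  induction p using MvPolynomial.induction_on with
  | C a => simp [comp2]
  | add p q hp hq =>
    simp only [comp2, map_add] at hp hq ⊢
    rw [hp.1, hp.2, hq.1, hq.2]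
    constructor <;> ring
  | mul_X p i hp =>
    simp only [comp2, map_mul, Derivation.leibniz, smul_eq_mul, map_add] at hp ⊢
    rw [hp.1, hp.2]
    fin_cases i <;> constructor <;> simp [pderiv_X, Derivation.leibniz] <;> ring

theorem comp2_hom (a₁ a₂ a₃ a₄ : ℂ) (p : P2) (n : ℕ) (hp : p.IsHomogeneous n) :
    (comp2 a₁ a₂ a₃ a₄ p).IsHomogeneous n := by
  have h : ∀ a b : ℂ, (C a * X 0 + C b * X 1 : P2).IsHomogeneous 1 := by
    intro a b
    exact ((isHomogeneous_X ℂ 0).C_mul a).add ((isHomogeneous_X ℂ 1).C_mul b)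
  have := hp.aeval (![C a₁ * X 0 + C a₂ * X 1, C a₃ * X 0 + C a₄ * X 1] : Fin 2 → P2) (n := 1)
    (by intro i; fin_cases i; exacts [h _ _, h _ _])
  simpa [comp2] using this

theorem comp2_comp2 (a₁ a₂ a₃ a₄ e : ℂ) (he : e * (a₁ * a₄ - a₂ * a₃) = 1) (p : P2) :
    comp2 (e*a₄) (-(e*a₂)) (-(e*a₃)) (e*a₁) (comp2 a₁ a₂ a₃ a₄ p) = p := by
  have hC := congrArg (C (σ := Fin 2)) he
  simp only [C_mul, C_sub, C_1] at hC
  induction p using MvPolynomial.induction_on with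
  | C a => simp [comp2]
  | add p q hp hq =>
    simp only [comp2, map_add] at hp hq ⊢
    rw [hp, hq]
  | mul_X p i hp =>
    have hX : comp2 (e*a₄) (-(e*a₂)) (-(e*a₃)) (e*a₁) (comp2 a₁ a₂ a₃ a₄ (X i)) = X i := by
      clear hp
      fin_cases i
      · simp [comp2]
        linear_combination X 0 * hC
      · simp [comp2]
        linear_combination X 1 * hC
    have hm : comp2 (e*a₄) (-(e*a₂)) (-(e*a₃)) (e*a₁) (comp2 a₁ a₂ a₃ a₄ (p * X i))
        = comp2 (e*a₄) (-(e*a₂)) (-(e*a₃)) (e*a₁) (comp2 a₁ a₂ a₃ a₄ p)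
          * comp2 (e*a₄) (-(e*a₂)) (-(e*a₃)) (e*a₁) (comp2 a₁ a₂ a₃ a₄ (X i)) := by
      simp only [comp2, map_mul]
    rw [hm, hp, hX]

theorem comp2_ncf (a₁ a₂ a₃ a₄ : ℂ) (hd : a₁ * a₄ - a₂ * a₃ ≠ 0) (A B : P2)
    (h : NoCommonFactor A B) :
    NoCommonFactor (C a₁ * comp2 a₁ a₂ a₃ a₄ A + C a₃ * comp2 a₁ a₂ a₃ a₄ B)
      (C a₂ * comp2 a₁ a₂ a₃ a₄ A + C a₄ * comp2 a₁ a₂ a₃ a₄ B) := by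
  intro p hpA hpB
  obtain ⟨e, he⟩ : ∃ e, e * (a₁ * a₄ - a₂ * a₃) = 1 := ⟨_, inv_mul_cancel₀ hd⟩
  have hC := congrArg (C (σ := Fin 2)) he
  simp only [C_mul, C_sub, C_1] at hC
  have h1 : p ∣ comp2 a₁ a₂ a₃ a₄ A := by
    have := dvd_sub (hpA.mul_left (C (e * a₄))) (hpB.mul_left (C (e * a₃)))
    convert this using 1
    simp only [C_mul]
    linear_combination -comp2 a₁ a₂ a₃ a₄ A * hC
  have h2 : p ∣ comp2 a₁ a₂ a₃ a₄ B := by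
    have := dvd_sub (hpB.mul_left (C (e * a₁))) (hpA.mul_left (C (e * a₂)))
    convert this using 1
    simp only [C_mul]
    linear_combination -comp2 a₁ a₂ a₃ a₄ B * hC
  have dv : ∀ (b₁ b₂ b₃ b₄ : ℂ) (q r : P2), q ∣ r →
      comp2 b₁ b₂ b₃ b₄ q ∣ comp2 b₁ b₂ b₃ b₄ r := by
    intro b₁ b₂ b₃ b₄ q r hqr
    exact map_dvd (aeval _) hqr
  have h1' := dv (e*a₄) (-(e*a₂)) (-(e*a₃)) (e*a₁) _ _ h1
  have h2' := dv (e*a₄) (-(e*a₂)) (-(e*a₃)) (e*a₁) _ _ h2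
  rw [comp2_comp2 _ _ _ _ _ he] at h1' h2'
  have hu := h _ h1' h2'
  have hu2 : IsUnit (comp2 a₁ a₂ a₃ a₄ (comp2 (e*a₄) (-(e*a₂)) (-(e*a₃)) (e*a₁) p)) :=
    hu.map (aeval _)
  have he' : (a₁ * a₄ - a₂ * a₃) * ((e*a₄) * (e*a₁) - (-(e*a₂)) * (-(e*a₃))) = 1 := by
    linear_combination (e * (a₁ * a₄ - a₂ * a₃) + 1) * he
  have := comp2_comp2 _ _ _ _ _ he' p
  have q1 : (a₁ * a₄ - a₂ * a₃) * (e * a₁) = a₁ := by linear_combination a₁ * he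
  have q2 : -((a₁ * a₄ - a₂ * a₃) * -(e * a₂)) = a₂ := by linear_combination a₂ * he
  have q3 : -((a₁ * a₄ - a₂ * a₃) * -(e * a₃)) = a₃ := by linear_combination a₃ * he
  have q4 : (a₁ * a₄ - a₂ * a₃) * (e * a₄) = a₄ := by linear_combination a₄ * he
  rw [q1, q2, q3, q4] at this
  rwa [this] at hu2

theorem comp2_Cpoly (a₁ a₂ a₃ a₄ : ℂ) (A B : P2) :
    Cpoly (C a₁ * comp2 a₁ a₂ a₃ a₄ A + C a₃ * comp2 a₁ a₂ a₃ a₄ B)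
      (C a₂ * comp2 a₁ a₂ a₃ a₄ A + C a₄ * comp2 a₁ a₂ a₃ a₄ B)
      = comp2 a₁ a₂ a₃ a₄ (Cpoly A B) := by
  simp [Cpoly, comp2]
  ring

theorem comp2_Dpoly (a₁ a₂ a₃ a₄ : ℂ) (A B : P2) :
    Dpoly (C a₁ * comp2 a₁ a₂ a₃ a₄ A + C a₃ * comp2 a₁ a₂ a₃ a₄ B)
      (C a₂ * comp2 a₁ a₂ a₃ a₄ A + C a₄ * comp2 a₁ a₂ a₃ a₄ B)
      = C ((a₁ * a₄ - a₂ * a₃) ^ 2) * comp2 a₁ a₂ a₃ a₄ (Dpoly A B) := by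
  have hd : comp2 a₁ a₂ a₃ a₄ (Dpoly A B)
      = comp2 a₁ a₂ a₃ a₄ (pderiv 0 A) * comp2 a₁ a₂ a₃ a₄ (pderiv 1 B)
        - comp2 a₁ a₂ a₃ a₄ (pderiv 1 A) * comp2 a₁ a₂ a₃ a₄ (pderiv 0 B) := by
    simp [Dpoly, comp2]
  rw [hd]
  simp only [Dpoly, map_add, pderiv_C_mul, (pderiv_comp2 a₁ a₂ a₃ a₄ _).1,
    (pderiv_comp2 a₁ a₂ a₃ a₄ _).2, C_pow, C_sub, C_mul]
  ring

theorem comp2_lin (a₁ a₂ a₃ a₄ p q : ℂ) :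
    comp2 a₁ a₂ a₃ a₄ (C p * X 0 + C q * X 1)
      = C (p * a₁ + q * a₃) * X 0 + C (p * a₂ + q * a₄) * X 1 := by
  simp [comp2]
  ring

/-- If the homogeneous foliation `ω = A dx + B dy` of degree 4 is convex of type `3·R₂`,
then `ω` is linearly conjugate to `ω₂ = y³(2x−y)dx + x³(x−2y)dy`. -/
theorem type_three_R2_classification
    (A B : P2) (hA : A.IsHomogeneous 4) (hB : B.IsHomogeneous 4)
    (hcop : NoCommonFactor A B)
    (c : ℂ) (hc : c ≠ 0) (l₁ l₂ l₃ : P2)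
    (h₁ : l₁.IsHomogeneous 1) (h₂ : l₂.IsHomogeneous 1) (h₃ : l₃.IsHomogeneous 1)
    (hn₁ : l₁ ≠ 0) (hn₂ : l₂ ≠ 0) (hn₃ : l₃ ≠ 0)
    (hp₁₂ : ¬ Proportional l₁ l₂) (hp₁₃ : ¬ Proportional l₁ l₃) (hp₂₃ : ¬ Proportional l₂ l₃)
    (hdvd₁ : l₁ ∣ Cpoly A B) (hdvd₂ : l₂ ∣ Cpoly A B) (hdvd₃ : l₃ ∣ Cpoly A B)
    (hD : Dpoly A B = C c * l₁ ^ 2 * l₂ ^ 2 * l₃ ^ 2) :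
    LinConj A B A2 B2 := by
  obtain ⟨p₁, q₁, rfl⟩ := hom_one l₁ h₁
  obtain ⟨p₂, q₂, rfl⟩ := hom_one l₂ h₂
  obtain ⟨p₃, q₃, rfl⟩ := hom_one l₃ h₃
  have d12 := det_ne _ _ _ _ hp₁₂
  have d13 := det_ne _ _ _ _ hp₁₃
  have d23 := det_ne _ _ _ _ hp₂₃
  obtain ⟨u, hu⟩ : ∃ u, u = p₁ * q₃ - p₃ * q₁ := ⟨_, rfl⟩
  obtain ⟨v, hv⟩ : ∃ v, v = -(p₂ * q₃ - p₃ * q₂) := ⟨_, rfl⟩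
  obtain ⟨w, hw⟩ : ∃ w, w = p₁ * q₂ - p₂ * q₁ := ⟨_, rfl⟩
  have hu0 : u ≠ 0 := by rw [hu]; exact d13
  have hv0 : v ≠ 0 := by rw [hv]; exact neg_ne_zero.2 d23
  have hw0 : w ≠ 0 := by rw [hw]; exact d12
  have hdet : (u * q₂) * (-(v * p₁)) - (v * q₁) * (-(u * p₂)) ≠ 0 := by
    have : (u * q₂) * (-(v * p₁)) - (v * q₁) * (-(u * p₂)) = -(u * v * w) := by rw [hw]; ring
    rw [this]
    exact neg_ne_zero.2 (mul_ne_zero (mul_ne_zero hu0 hv0) hw0)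
  have L1 : comp2 (u * q₂) (v * q₁) (-(u * p₂)) (-(v * p₁)) (C p₁ * X 0 + C q₁ * X 1)
      = C (u * w) * X 0 := by
    rw [comp2_lin, show p₁ * (u * q₂) + q₁ * (-(u * p₂)) = u * w by rw [hw]; ring,
      show p₁ * (v * q₁) + q₁ * (-(v * p₁)) = 0 by ring]
    simp
  have L2 : comp2 (u * q₂) (v * q₁) (-(u * p₂)) (-(v * p₁)) (C p₂ * X 0 + C q₂ * X 1)
      = C (-(v * w)) * X 1 := by
    rw [comp2_lin, show p₂ * (u * q₂) + q₂ * (-(u * p₂)) = 0 by ring,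
      show p₂ * (v * q₁) + q₂ * (-(v * p₁)) = -(v * w) by rw [hw]; ring]
    simp
  have L3 : comp2 (u * q₂) (v * q₁) (-(u * p₂)) (-(v * p₁)) (C p₃ * X 0 + C q₃ * X 1)
      = C (u * v) * (X 0 - X 1) := by
    rw [comp2_lin, show p₃ * (u * q₂) + q₃ * (-(u * p₂)) = u * v by rw [hv]; ring,
      show p₃ * (v * q₁) + q₃ * (-(v * p₁)) = -(u * v) by rw [hu]; ring, C_neg]
    ring
  have dv : ∀ (b₁ b₂ b₃ b₄ : ℂ) (q r : P2), q ∣ r →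
      comp2 b₁ b₂ b₃ b₄ q ∣ comp2 b₁ b₂ b₃ b₄ r := by
    intro b₁ b₂ b₃ b₄ q r hqr
    exact map_dvd (aeval _) hqr
  have E1 := dv (u * q₂) (v * q₁) (-(u * p₂)) (-(v * p₁)) _ _ hdvd₁
  have E2 := dv (u * q₂) (v * q₁) (-(u * p₂)) (-(v * p₁)) _ _ hdvd₂
  have E3 := dv (u * q₂) (v * q₁) (-(u * p₂)) (-(v * p₁)) _ _ hdvd₃
  rw [L1, ← comp2_Cpoly] at E1
  rw [L2, ← comp2_Cpoly] at E2
  rw [L3, ← comp2_Cpoly] at E3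
  have HD := comp2_Dpoly (u * q₂) (v * q₁) (-(u * p₂)) (-(v * p₁)) A B
  have hmul : comp2 (u * q₂) (v * q₁) (-(u * p₂)) (-(v * p₁)) (Dpoly A B)
      = C c * (C (u * w) * X 0) ^ 2 * (C (-(v * w)) * X 1) ^ 2 * (C (u * v) * (X 0 - X 1)) ^ 2 := by
    rw [hD, ← L1, ← L2, ← L3]
    simp only [comp2, map_mul, map_pow, algHom_C, algebraMap_eq]
  rw [hmul] at HD
  have hh : ∀ a b : ℂ, (C a * comp2 (u * q₂) (v * q₁) (-(u * p₂)) (-(v * p₁)) A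
      + C b * comp2 (u * q₂) (v * q₁) (-(u * p₂)) (-(v * p₁)) B).IsHomogeneous 4 := by
    intro a b
    exact ((comp2_hom _ _ _ _ _ _ hA).C_mul a).add ((comp2_hom _ _ _ _ _ _ hB).C_mul b)
  obtain ⟨b, hb, r1, r2⟩ := core _ _ (hh _ _) (hh _ _) (comp2_ncf _ _ _ _ hdet A B hcop)
    (((u * q₂) * (-(v * p₁)) - (v * q₁) * (-(u * p₂))) ^ 2 * (c * (u * w) ^ 2 * (-(v * w)) ^ 2 * (u * v) ^ 2))
    ((Dvd.intro_left _ rfl).trans E1) ((Dvd.intro_left _ rfl).trans E2)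
    ((Dvd.intro_left _ rfl).trans E3)
    (by rw [HD]; simp only [C_mul, C_pow]; ring)
  exact ⟨_, _, _, _, b, hdet, hb, r1, r2⟩
end
end

section
/- Let α, a₀, a₁, a₂, b ∈ ℂ with a₂ ≠ 0, α ≠ 0 and α ≠ 1. Define P(z) = a₂z⁴ + a₁z³ + a₀z² + b and Q(z) = a₂z⁴ + a₁z³ + a₀z² + αb. Then the system P(1) = 0, P′(1) = 0, Q(α) = 0, Q′(α) = 0 holds if and only if a₀ = 2a₂α, a₁ = −4a₂(α+1)/3, b = −a₂(2α−1)/3, and α² − α + 1 = 0. -/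
open Polynomial

noncomputable section

/-- `P(z) = a₂z⁴ + a₁z³ + a₀z² + b`. -/
def Ppoly (a₀ a₁ a₂ b : ℂ) : Polynomial ℂ :=
  C a₂ * X ^ 4 + C a₁ * X ^ 3 + C a₀ * X ^ 2 + C b

/-- `Q(z) = a₂z⁴ + a₁z³ + a₀z² + αb`. -/
def Qpoly (a₀ a₁ a₂ b α : ℂ) : Polynomial ℂ :=
  C a₂ * X ^ 4 + C a₁ * X ^ 3 + C a₀ * X ^ 2 + C (α * b)

/-- The system `P(1) = P′(1) = Q(α) = Q′(α) = 0` holds iff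
`a₀ = 2a₂α`, `a₁ = −4a₂(α+1)/3`, `b = −a₂(2α−1)/3` and `α² − α + 1 = 0`. -/
theorem system_solution (α a₀ a₁ a₂ b : ℂ) (ha₂ : a₂ ≠ 0) (hα0 : α ≠ 0) (hα1 : α ≠ 1) :
    ((Ppoly a₀ a₁ a₂ b).eval 1 = 0 ∧
     (derivative (Ppoly a₀ a₁ a₂ b)).eval 1 = 0 ∧
     (Qpoly a₀ a₁ a₂ b α).eval α = 0 ∧
     (derivative (Qpoly a₀ a₁ a₂ b α)).eval α = 0) ↔
    (a₀ = 2 * a₂ * α ∧ a₁ = -(4 * a₂ * (α + 1)) / 3 ∧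
     b = -(a₂ * (2 * α - 1)) / 3 ∧ α ^ 2 - α + 1 = 0) := by
  have e1 : (Ppoly a₀ a₁ a₂ b).eval 1 = a₂ + a₁ + a₀ + b := by
    simp [Ppoly]
  have e2 : (derivative (Ppoly a₀ a₁ a₂ b)).eval 1 = 4 * a₂ + 3 * a₁ + 2 * a₀ := by
    simp [Ppoly]
    ring
  have e3 : (Qpoly a₀ a₁ a₂ b α).eval α = a₂ * α ^ 4 + a₁ * α ^ 3 + a₀ * α ^ 2 + α * b := by
    simp [Qpoly]
  have e4 : (derivative (Qpoly a₀ a₁ a₂ b α)).eval α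
      = α * (4 * a₂ * α ^ 2 + 3 * a₁ * α + 2 * a₀) := by
    simp [Qpoly]
    ring
  rw [e1, e2, e3, e4]
  have hs : α - 1 ≠ 0 := sub_ne_zero.mpr hα1
  constructor
  · rintro ⟨h1, h2, h3, h4⟩
    have h4' := (mul_eq_zero.mp h4).resolve_left hα0
    have h5 : 4 * a₂ * (α + 1) + 3 * a₁ = 0 := by
      apply mul_left_cancel₀ hs
      linear_combination h4' - h2
    have ea1 : a₁ = -(4 * a₂ * (α + 1)) / 3 := by linear_combination h5 / 3
    have ea0 : a₀ = 2 * a₂ * α := by linear_combination h2 / 2 - h5 / 2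
    have eb : b = -(a₂ * (2 * α - 1)) / 3 := by
      linear_combination h1 - ea1 - ea0
    refine ⟨ea0, ea1, eb, ?_⟩
    apply mul_left_cancel₀ (mul_ne_zero (mul_ne_zero ha₂ hα0) hs)
    rw [ea0, ea1, eb] at h3
    linear_combination -3 * h3
  · rintro ⟨rfl, rfl, rfl, h⟩
    refine ⟨by ring, by ring, ?_, by ring⟩
    linear_combination -(a₂ * α * (α - 1) / 3) * h
end
end

section
/- Let c ∈ ℂ satisfy 16c² + 12c + 1 = 0 (equivalently c = −3/8 ± √5/8). Set ω = y³(2y + 3cy − 4cx − 3x)dx + x³(y + cx)dy and let φ be the linear map φ(x,y) = (2x, 8cy). Then ω₄ := y³(4x+y)dx + x³(x+4y)dy satisfies ω₄ = ((3c+2)/2)·φ*ω, where φ*ω = (A∘φ)·d(2x) + (B∘φ)·d(8cy) for ω = A dx + B dy. -/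
open MvPolynomial

noncomputable section

/-- Pullback of the 1-form `ω = A dx + B dy` by the polynomial map `φ = (φ₁, φ₂)`:
`φ*ω = (A∘φ)dφ₁ + (B∘φ)dφ₂`, returned as the pair of its `dx`- and `dy`-coefficients. -/
def pullback (φ₁ φ₂ A B : P2) : P2 × P2 :=
  (aeval ![φ₁, φ₂] A * pderiv 0 φ₁ + aeval ![φ₁, φ₂] B * pderiv 0 φ₂,
   aeval ![φ₁, φ₂] A * pderiv 1 φ₁ + aeval ![φ₁, φ₂] B * pderiv 1 φ₂)

/-- For `16c² + 12c + 1 = 0` and `φ(x,y) = (2x, 8cy)`, one has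
`ω₄ = ((3c+2)/2)·φ*ω` where `ω = y³(2y+3cy−4cx−3x)dx + x³(y+cx)dy`. -/
theorem omega4_pullback (c : ℂ) (hc : 16 * c ^ 2 + 12 * c + 1 = 0) :
    (X 1 ^ 3 * (4 * X 0 + X 1), X 0 ^ 3 * (X 0 + 4 * X 1)) =
      (C ((3 * c + 2) / 2) *
        (pullback (2 * X 0) (8 * C c * X 1)
          (X 1 ^ 3 * (2 * X 1 + 3 * C c * X 1 - 4 * C c * X 0 - 3 * X 0))
          (X 0 ^ 3 * (X 1 + C c * X 0))).1,
       C ((3 * c + 2) / 2) *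
        (pullback (2 * X 0) (8 * C c * X 1)
          (X 1 ^ 3 * (2 * X 1 + 3 * C c * X 1 - 4 * C c * X 0 - 3 * X 0))
          (X 0 ^ 3 * (X 1 + C c * X 0))).2) := by
  have h : (16 * C c ^ 2 + 12 * C c + 1 : P2) = 0 := by
    have := congrArg (C : ℂ → P2) hc
    simpa only [map_add, map_mul, map_pow, map_ofNat, map_one, map_zero] using this
  have hD : (2 * C ((3 * c + 2) / 2) : P2) = 3 * C c + 2 := by
    have : (3 * c + 2 : ℂ) = 2 * ((3 * c + 2) / 2) := by ring
    have := congrArg (C : ℂ → P2) this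
    simp only [map_add, map_mul, map_ofNat] at this
    exact this.symm
  have hK : (128 * C c ^ 2 * C ((3 * c + 2) / 2) : P2) = 1 := by
    linear_combination (64 * C c ^ 2) * hD + (12 * C c - 1) * h
  have e8 : (8 : P2) = C 8 := (map_ofNat C 8).symm
  have e2 : (2 : P2) = C 2 := (map_ofNat C 2).symm
  have d1 : pderiv 0 (2 * X 0 : P2) = 2 := by
    rw [e2, pderiv_C_mul, pderiv_X_self, mul_one]
  have d2 : pderiv 1 (2 * X 0 : P2) = 0 := by
    rw [e2, pderiv_C_mul, pderiv_X_of_ne (by decide), mul_zero]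
  have d3 : pderiv 0 (8 * C c * X 1 : P2) = 0 := by
    rw [e8, ← C_mul, pderiv_C_mul, pderiv_X_of_ne (by decide), mul_zero]
  have d4 : pderiv 1 (8 * C c * X 1 : P2) = 8 * C c := by
    rw [e8, ← C_mul, pderiv_C_mul, pderiv_X_self, mul_one]
  simp only [pullback, d1, d2, d3, d4, map_mul, map_add, map_sub, map_pow, map_ofNat, aeval_X,
    aeval_C, algebraMap_eq, Matrix.cons_val_zero, Matrix.cons_val_one]
  generalize C ((3 * c + 2) / 2) = D at *
  generalize C c = k at *
  ext1
  · dsimp only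
    linear_combination (-8 * k * X 1 ^ 3 * ((2 + 3 * k) * 8 * k * X 1 - (4 * k + 3) * 2 * X 0)) * hK
      - (X 1 ^ 4 * (12 * k - 1) - 4 * X 1 ^ 3 * X 0) * h
  · dsimp only
    linear_combination (-(X 0 ^ 3 * (X 0 + 4 * X 1))) * hK
end
end
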